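/- arXiv:1305.1178 — 5 statements merged into one kernel-verified Lean document; each statement's English description precedes it below -/
import Mathlib

section
/- Let d ≥ 1 and r ≥ 1 be integers and set m = (d+1)(r-1)+1. For any points p₁, …, p_m in ℝ^d there exists a point c ∈ ℝ^d such that c lies in the convex hull of {p_i : i ∈ S} for every subset S ⊆ {1, …, m} with |S| ≥ d(r-1)+1. -/
/-!
By Helly's theorem it suffices to show that any `d + 1` of the large subsets share a point of the
configuration. This is a count of complements: each leaves out less than a `1 / (d + 1)` fraction of
the points, so `d + 1` of them together cannot leave out every point.
-/

open Finset Module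

section CommonElement

variable {ι κ : Type*} [Fintype ι] {s : Finset κ} {A : κ → Finset ι}

theorem exists_forall_mem_of_sum_card_compl_lt_card [DecidableEq ι]
    (h : ∑ j ∈ s, #(A j)ᶜ < Fintype.card ι) : ∃ i, ∀ j ∈ s, i ∈ A j := by
  have hunion : #(s.biUnion fun j ↦ (A j)ᶜ) < #(univ : Finset ι) := card_biUnion_le.trans_lt h
  obtain ⟨i, -, hi⟩ := exists_mem_notMem_of_card_lt_card hunion
  exact ⟨i, by simpa using hi⟩

theorem exists_forall_mem_of_mul_card_lt_succ_mul_card {d : ℕ} (hs : s.Nonempty)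
    (hsd : #s ≤ d + 1) (hA : ∀ j ∈ s, d * Fintype.card ι < (d + 1) * #(A j)) :
    ∃ i, ∀ j ∈ s, i ∈ A j := by
  classical
  have hcompl (j : κ) (hj : j ∈ s) : (d + 1) * #(A j)ᶜ < Fintype.card ι := by
    have hlarge := hA j hj
    rw [← card_add_card_compl (A j)] at hlarge ⊢
    linarith
  refine exists_forall_mem_of_sum_card_compl_lt_card (Nat.lt_of_mul_lt_mul_left (a := d + 1) ?_)
  calc
    (d + 1) * ∑ j ∈ s, #(A j)ᶜ = ∑ j ∈ s, (d + 1) * #(A j)ᶜ := mul_sum ..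
    _ < ∑ _j ∈ s, Fintype.card ι := sum_lt_sum_of_nonempty hs hcompl
    _ = #s * Fintype.card ι := sum_const_nat fun _ _ ↦ rfl
    _ ≤ (d + 1) * Fintype.card ι := Nat.mul_le_mul_right _ hsd

end CommonElement

section Helly

variable {ι κ : Type*} (𝕜 : Type*) {E : Type*} [Field 𝕜] [LinearOrder 𝕜] [IsStrictOrderedRing 𝕜]
  [AddCommGroup E] [Module 𝕜 E] [FiniteDimensional 𝕜 E] (p : ι → E)

theorem exists_forall_mem_convexHull_image {s : Finset κ} {A : κ → Set ι}
    (hA : ∀ t ⊆ s, t.Nonempty → #t ≤ finrank 𝕜 E + 1 → ∃ i, ∀ j ∈ t, i ∈ A j) :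
    ∃ c : E, ∀ j ∈ s, c ∈ convexHull 𝕜 (p '' A j) := by
  suffices (⋂ j ∈ s, convexHull 𝕜 (p '' A j)).Nonempty by
    simpa only [Set.Nonempty, Set.mem_iInter₂] using this
  refine Convex.helly_theorem' (fun _ _ ↦ convex_convexHull 𝕜 _) fun t hts ht ↦ ?_
  rcases t.eq_empty_or_nonempty with rfl | hne
  · simp
  · obtain ⟨i, hi⟩ := hA t hts hne ht
    exact ⟨p i, Set.mem_iInter₂.2 fun j hj ↦
      subset_convexHull 𝕜 _ (Set.mem_image_of_mem p (hi j hj))⟩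

theorem central_point_theorem_general [Fintype ι] :
    ∃ c : E, ∀ S : Finset ι, finrank 𝕜 E * Fintype.card ι < (finrank 𝕜 E + 1) * #S →
      c ∈ convexHull 𝕜 (p '' (S : Set ι)) := by
  let large : Finset (Finset ι) := {S | finrank 𝕜 E * Fintype.card ι < (finrank 𝕜 E + 1) * #S}
  obtain ⟨c, hc⟩ := exists_forall_mem_convexHull_image 𝕜 p (s := large) (A := fun S ↦ (S : Set ι))
    fun t ht hne hcard ↦ exists_forall_mem_of_mul_card_lt_succ_mul_card (A := id) hne hcard
      fun S hS ↦ (mem_filter.1 (ht hS)).2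
  exact ⟨c, fun S hS ↦ hc S (mem_filter.2 ⟨mem_univ S, hS⟩)⟩

end Helly

/-- **Classical Central Point Theorem.** Given any `m = (d+1)(r-1)+1` points in `ℝ^d`,
there is a point `c ∈ ℝ^d` lying in the convex hull of every subset of the points
having at least `d(r-1)+1` elements. -/
theorem central_point_theorem (d r : ℕ) (hd : 1 ≤ d) (hr : 1 ≤ r)
    (m : ℕ) (hm : m = (d + 1) * (r - 1) + 1)
    (p : Fin m → EuclideanSpace ℝ (Fin d)) :
    ∃ c : EuclideanSpace ℝ (Fin d),
      ∀ S : Finset (Fin m), d * (r - 1) + 1 ≤ S.card →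
        c ∈ convexHull ℝ (p '' (S : Set (Fin m))) := by
  obtain ⟨c, hc⟩ := central_point_theorem_general ℝ p
  refine ⟨c, fun S hS ↦ hc S ?_⟩
  rw [finrank_euclideanSpace_fin, Fintype.card_fin]
  linarith [congrArg (d * ·) hm, Nat.mul_le_mul_left (d + 1) hS]
end

section
/- Let d ≥ 1 and r ≥ 1 be integers and set m = (d+1)(r-1)+1. For any points p₁, …, p_m in ℝ^d there exists a function σ : {1, …, m} → {1, …, r} (a partition of the index set into r parts X₁, …, X_r, where X_j = σ⁻¹(j)) such that the intersection ⋂_{j=1}^{r} conv{p_i : i ∈ X_j} is nonempty. -/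
/-!
Tverberg's theorem is reduced to the colorful Carathéodory theorem by Sarkaria's tensor trick.

*Colorful Carathéodory.* Suppose a point `x` lies in the convex hull of each of more than
`finrank ℝ E` sets `C i`, which may be taken finite. Among all selections of one point from each
set, choose one whose hull comes nearest to `x`, at a point `z`. If `z ≠ x`, then `z` lies on a
face of the hull contained in the hyperplane through `z` orthogonal to `x - z`, so by
Carathéodory's theorem in that hyperplane some selected point `c k` is superfluous for `z`. Since
`x` is in the hull of `C k`, some point of `C k` lies strictly on the side of `x`, and replacing
`c k` by it brings the hull closer to `x`.

*Sarkaria's trick.* Lift each `p i` to `(p i, 1)` and let `C i` consist of the classes, modulo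
constant functions, of the functions `κ → E × ℝ` supported at one index with value `(p i, 1)`. The
elements of `C i` sum to zero, so `0` is in the hull of each `C i`. A selection amounts to an
assignment `σ : ι → κ`, and a convex combination of it vanishes exactly when the weighted sums of
the lifted points over all fibers of `σ` agree; normalizing the common value gives a common point of
the hulls.
-/

open Set Module
open scoped RealInnerProductSpace

lemma card_le_finrank_of_affineIndependent_of_map_eq {k V ι : Type*} [DivisionRing k]
    [AddCommGroup V] [Module k V] [FiniteDimensional k V] [Fintype ι] {p : ι → V}
    {f : V →ₗ[k] k} {a : k} (hf : f ≠ 0) (hp : AffineIndependent k p) (hfp : ∀ i, f (p i) = a) :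
    Fintype.card ι ≤ finrank k V := by
  have hspan : vectorSpan k (range p) ≤ LinearMap.ker f := by
    rw [vectorSpan_def, Submodule.span_le]
    rintro _ ⟨_, ⟨i, rfl⟩, _, ⟨j, rfl⟩, rfl⟩
    simp [hfp]
  have hker : finrank k (LinearMap.ker f) < finrank k V :=
    Submodule.finrank_lt (mt LinearMap.ker_eq_top.1 hf)
  calc Fintype.card ι ≤ finrank k (vectorSpan k (range p)) + 1 := hp.card_le_finrank_succ
    _ ≤ finrank k (LinearMap.ker f) + 1 := by gcongr; exact Submodule.finrank_mono hspan
    _ ≤ finrank k V := hker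

section OrderedField

variable {𝕜 E ι : Type*} [Field 𝕜] [LinearOrder 𝕜] [IsStrictOrderedRing 𝕜]
  [AddCommGroup E] [Module 𝕜 E]

lemma mem_convexHull_range_iff_exists_stdSimplex [Fintype ι] {c : ι → E} {x : E} :
    x ∈ convexHull 𝕜 (range c) ↔ ∃ w ∈ stdSimplex 𝕜 ι, ∑ i, w i • c i = x := by
  classical
  have hrange : range c = Fintype.linearCombination 𝕜 c '' range fun i ↦ Pi.single i (1 : 𝕜) := by
    rw [← range_comp]
    congr 1
    ext i
    simp
  rw [hrange, ← LinearMap.image_convexHull, convexHull_rangle_single_eq_stdSimplex]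
  simp only [mem_image, Fintype.linearCombination_apply]

lemma map_eq_of_sum_smul_eq_of_map_le [Fintype ι] {w : ι → 𝕜} {c : ι → E} {z : E}
    (f : E →ₗ[𝕜] 𝕜) (hw : ∀ i, 0 < w i) (hw₁ : ∑ i, w i = 1) (hz : ∑ i, w i • c i = z)
    (hf : ∀ i, f (c i) ≤ f z) (i : ι) : f (c i) = f z := by
  have hsum : ∑ i, w i * f (c i) = ∑ i, w i * f z := by
    rw [← Finset.sum_mul, hw₁, one_mul, ← hz, map_sum]
    simp only [map_smul, smul_eq_mul]
  have hterm := (Finset.sum_eq_sum_iff_of_le fun i _ ↦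
    mul_le_mul_of_nonneg_left (hf i) (hw i).le).1 hsum i (Finset.mem_univ i)
  exact mul_left_cancel₀ (hw i).ne' hterm

lemma exists_mem_convexHull_image_compl_singleton [FiniteDimensional 𝕜 E] [Fintype ι]
    {c : ι → E} {z : E} {f : E →ₗ[𝕜] 𝕜} (hf : f ≠ 0) (hz : z ∈ convexHull 𝕜 (range c))
    (hle : ∀ i, f (c i) ≤ f z) (hcard : finrank 𝕜 E < Fintype.card ι) :
    ∃ k, z ∈ convexHull 𝕜 (c '' {k}ᶜ) := by
  obtain ⟨α, _, y, w, hyc, hy, hw, hw₁, hwz⟩ := eq_pos_convex_span_of_mem_convexHull hz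
  choose g hg using fun a ↦ hyc (mem_range_self a)
  have hface : ∀ a, f (y a) = f z :=
    map_eq_of_sum_smul_eq_of_map_le f hw hw₁ hwz fun a ↦ hg a ▸ hle (g a)
  have hα : Fintype.card α < Fintype.card ι :=
    (card_le_finrank_of_affineIndependent_of_map_eq hf hy hface).trans_lt hcard
  obtain ⟨k, hk⟩ : ∃ k, ∀ a, g a ≠ k := by
    by_contra! hsurj
    exact (Fintype.card_le_of_surjective g hsurj).not_gt hα
  exact ⟨k, mem_convexHull_of_exists_fintype w y (fun a ↦ (hw a).le) hw₁
    (fun a ↦ ⟨g a, hk a, hg a⟩) hwz⟩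

end OrderedField

lemma exists_selection_forall_dist_le {E ι : Type*} [SeminormedAddCommGroup E] [NormedSpace ℝ E]
    [Finite ι] [Nonempty ι] {C : ι → Set E} (hfin : ∀ i, (C i).Finite)
    (hne : ∀ i, (C i).Nonempty) (x : E) :
    ∃ c ∈ univ.pi C, ∃ z ∈ convexHull ℝ (range c),
      ∀ c' ∈ univ.pi C, ∀ y ∈ convexHull ℝ (range c'), dist x z ≤ dist x y := by
  have hcompact : IsCompact (⋃ c ∈ univ.pi C, convexHull ℝ (range c)) :=
    (Finite.pi hfin).isCompact_biUnion fun c _ ↦ (finite_range c).isCompact_convexHull ℝ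
  have hnonempty : (⋃ c ∈ univ.pi C, convexHull ℝ (range c)).Nonempty :=
    nonempty_biUnion.2 <| (univ_pi_nonempty_iff.2 hne).imp fun c hc ↦
      ⟨hc, (range_nonempty c).convexHull⟩
  obtain ⟨z, hz, hmin⟩ := hcompact.exists_isMinOn hnonempty
    (continuous_const.dist continuous_id).continuousOn
  obtain ⟨c, hc, hzc⟩ := mem_iUnion₂.1 hz
  exact ⟨c, hc, z, hzc, fun c' hc' y hy ↦ hmin (mem_biUnion hc' hy)⟩

section InnerProductSpace

variable {E ι : Type*} [NormedAddCommGroup E] [InnerProductSpace ℝ E]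

lemma inner_sub_sub_nonpos_of_forall_dist_le {K : Set E} (hK : Convex ℝ K) {x z : E} (hz : z ∈ K)
    (hmin : ∀ y ∈ K, dist x z ≤ dist x y) {y : E} (hy : y ∈ K) : ⟪x - z, y - z⟫ ≤ 0 := by
  have : Nonempty K := ⟨⟨z, hz⟩⟩
  have hinf : ‖x - z‖ = ⨅ y : K, ‖x - y‖ := by
    simp only [← dist_eq_norm]
    exact le_antisymm (le_ciInf fun y ↦ hmin y y.2)
      (ciInf_le ⟨0, by rintro _ ⟨y, rfl⟩; exact dist_nonneg⟩ (⟨z, hz⟩ : K))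
  exact (norm_eq_iInf_iff_real_inner_le_zero hK hz).1 hinf y hy

lemma exists_mem_inner_sub_pos_of_mem_convexHull {s : Set E} {x z : E}
    (hx : x ∈ convexHull ℝ s) (hxz : x ≠ z) : ∃ y ∈ s, 0 < ⟪x - z, y - z⟫ := by
  by_contra! hs
  simp only [inner_sub_right, sub_nonpos] at hs
  have hhalf : convexHull ℝ s ⊆ {y | ⟪x - z, y⟫ ≤ ⟪x - z, z⟫} :=
    convexHull_min hs (convex_halfSpace_le (innerₗ E (x - z)).isLinear _)
  have hxx : ⟪x - z, x - z⟫ ≤ 0 := by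
    rw [inner_sub_right]
    exact sub_nonpos.2 (hhalf hx)
  exact hxz (sub_eq_zero.1 (real_inner_self_nonpos.1 hxx))

theorem colorful_caratheodory_of_finite [FiniteDimensional ℝ E] [Fintype ι] {C : ι → Set E} {x : E}
    (hfin : ∀ i, (C i).Finite) (hx : ∀ i, x ∈ convexHull ℝ (C i))
    (hcard : finrank ℝ E < Fintype.card ι) :
    ∃ c ∈ univ.pi C, x ∈ convexHull ℝ (range c) := by
  classical
  have : Nonempty ι := Fintype.card_pos_iff.1 (by lia)
  obtain ⟨c, hc, z, hz, hmin⟩ :=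
    exists_selection_forall_dist_le hfin (fun i ↦ convexHull_nonempty_iff.1 ⟨x, hx i⟩) x
  suffices hxz : x = z from ⟨c, hc, hxz ▸ hz⟩
  by_contra hxz
  have hface : ∀ i, innerₗ E (x - z) (c i) ≤ innerₗ E (x - z) z := fun i ↦ by
    rw [← sub_nonpos, ← map_sub]
    exact inner_sub_sub_nonpos_of_forall_dist_le (convex_convexHull ℝ _) hz (hmin c hc)
      (subset_convexHull ℝ _ (mem_range_self i))
  have hne : innerₗ E (x - z) ≠ 0 := fun h ↦
    hxz (sub_eq_zero.1 (inner_self_eq_zero.1 (LinearMap.congr_fun h (x - z))))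
  obtain ⟨k, hzk⟩ := exists_mem_convexHull_image_compl_singleton hne hz hface hcard
  obtain ⟨y, hyC, hy⟩ := exists_mem_inner_sub_pos_of_mem_convexHull (hx k) hxz
  have hsub : c '' {k}ᶜ ⊆ range (Function.update c k y) := by
    rintro _ ⟨i, hik, rfl⟩
    exact ⟨i, Function.update_of_ne hik y c⟩
  have hupdate : Function.update c k y ∈ univ.pi C :=
    (update_mem_pi_iff_of_mem hc).2 fun _ ↦ hyC
  have hyhull : y ∈ convexHull ℝ (range (Function.update c k y)) :=
    subset_convexHull ℝ _ ⟨k, Function.update_self k y c⟩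
  exact hy.not_ge <| inner_sub_sub_nonpos_of_forall_dist_le (convex_convexHull ℝ _)
    (convexHull_mono hsub hzk) (hmin _ hupdate) hyhull

end InnerProductSpace

theorem colorful_caratheodory {E ι : Type*} [AddCommGroup E] [Module ℝ E] [FiniteDimensional ℝ E]
    [Fintype ι] {C : ι → Set E} {x : E} (hx : ∀ i, x ∈ convexHull ℝ (C i))
    (hcard : finrank ℝ E < Fintype.card ι) :
    ∃ c ∈ univ.pi C, x ∈ convexHull ℝ (range c) := by
  let e : E ≃ₗ[ℝ] EuclideanSpace ℝ (Fin (finrank ℝ E)) := LinearEquiv.ofFinrankEq _ _ (by simp)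
  have hsubset : ∀ i, ∃ t : Finset E, ↑t ⊆ C i ∧ x ∈ convexHull ℝ (t : Set E) := fun i ↦ by
    simpa only [convexHull_eq_union_convexHull_finite_subsets (C i), mem_iUnion, exists_prop]
      using hx i
  choose t htC hxt using hsubset
  obtain ⟨c, hc, hxc⟩ := colorful_caratheodory_of_finite (C := fun i ↦ e '' t i) (x := e x)
    (fun i ↦ (t i).finite_toSet.image e)
    (fun i ↦ e.toLinearMap.image_convexHull _ ▸ mem_image_of_mem e (hxt i)) (by simpa using hcard)
  refine ⟨e.symm ∘ c, fun i hi ↦ ?_, ?_⟩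
  · obtain ⟨y, hy, hyc⟩ := hc i hi
    simpa [← hyc] using htC i hy
  · rw [range_comp, ← e.symm.coe_coe, ← e.symm.toLinearMap.image_convexHull]
    exact ⟨e x, hxc, e.symm_apply_apply x⟩

section Sarkaria

/-- The target of Sarkaria's tensor trick: functions `κ → V` modulo the constant ones. For `κ` with
`r` elements it plays the role of the tensor product `ℝ^(r-1) ⊗ V`. -/
abbrev SarkariaSpace (R κ V : Type*) [Ring R] [AddCommGroup V] [Module R V] : Type _ :=
  (κ → V) ⧸ LinearMap.range (LinearMap.const : V →ₗ[R] κ → V)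

variable (R : Type*) {κ : Type*} (V : Type*) [Ring R] [AddCommGroup V] [Module R V]
  [DecidableEq κ]

/-- The class in `SarkariaSpace R κ V` of the function with value `v` at `j` and zero elsewhere;
in the tensor product picture this is `u_j ⊗ v`, where the vectors `u_j` sum to zero. -/
def sarkariaMap (j : κ) : V →ₗ[R] SarkariaSpace R κ V :=
  Submodule.mkQ _ ∘ₗ LinearMap.single R (fun _ : κ ↦ V) j

lemma sum_sarkariaMap_eq_zero_iff {ι : Type*} [Fintype ι] (σ : ι → κ) (v : ι → V) :
    ∑ i, sarkariaMap R V (σ i) (v i) = 0 ↔ ∃ a, ∀ j, ∑ i with σ i = j, v i = a := by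
  have hfiber : ∑ i, LinearMap.single R (fun _ : κ ↦ V) (σ i) (v i) =
      fun j ↦ ∑ i with σ i = j, v i := by
    ext j
    simp only [Finset.sum_apply, LinearMap.single_apply, Pi.single_apply, Finset.sum_filter,
      eq_comm (a := j)]
  have hmk : ∑ i, sarkariaMap R V (σ i) (v i) =
      Submodule.mkQ (LinearMap.range LinearMap.const) fun j ↦ ∑ i with σ i = j, v i := by
    rw [← hfiber, map_sum]
    rfl
  rw [hmk, Submodule.mkQ_apply, Submodule.Quotient.mk_eq_zero]
  simp only [LinearMap.mem_range, LinearMap.const_apply, funext_iff, Function.const_apply, eq_comm]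

lemma sum_sarkariaMap_eq_zero [Fintype κ] (v : V) : ∑ j : κ, sarkariaMap R V j v = 0 :=
  (sum_sarkariaMap_eq_zero_iff R V id fun _ ↦ v).2 ⟨v, fun j ↦ by simp [Finset.filter_eq']⟩

end Sarkaria

lemma finrank_sarkariaSpace (k κ V : Type*) [DivisionRing k] [AddCommGroup V]
    [Module k V] [FiniteDimensional k V] [Fintype κ] [Nonempty κ] :
    finrank k (SarkariaSpace k κ V) = (Fintype.card κ - 1) * finrank k V := by
  have hconst : finrank k (LinearMap.range (LinearMap.const : V →ₗ[k] κ → V)) = finrank k V :=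
    LinearMap.finrank_range_of_inj Function.const_injective
  have hquot := Submodule.finrank_quotient_add_finrank
    (LinearMap.range (LinearMap.const : V →ₗ[k] κ → V))
  rw [hconst, finrank_pi_fintype, Finset.sum_const, Finset.card_univ, smul_eq_mul] at hquot
  rw [Nat.sub_mul, one_mul, ← hquot, Nat.add_sub_cancel]

section OrderedField

variable {𝕜 E ι κ : Type*} [Field 𝕜] [LinearOrder 𝕜] [IsStrictOrderedRing 𝕜]
  [AddCommGroup E] [Module 𝕜 E]

lemma zero_mem_convexHull_range_sarkariaMap [DecidableEq κ] [Finite κ] [Nonempty κ] (v : E) :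
    0 ∈ convexHull 𝕜 (range fun j : κ ↦ sarkariaMap 𝕜 E j v) := by
  have := Fintype.ofFinite κ
  refine mem_convexHull_range_iff_exists_stdSimplex.2
    ⟨fun _ ↦ (Fintype.card κ : 𝕜)⁻¹, ⟨fun _ ↦ by positivity, by simp⟩, ?_⟩
  rw [← Finset.smul_sum, sum_sarkariaMap_eq_zero, smul_zero]

lemma nonempty_iInter_convexHull_image_fiber_of_sum_eq [DecidableEq κ] [Fintype ι] {p : ι → E}
    {w : ι → 𝕜} (hw : w ∈ stdSimplex 𝕜 ι) {σ : ι → κ} {a : E × 𝕜}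
    (ha : ∀ j, ∑ i with σ i = j, w i • (p i, (1 : 𝕜)) = a) :
    (⋂ j, convexHull 𝕜 (p '' (σ ⁻¹' {j}))).Nonempty := by
  have hmass : ∀ j, ∑ i with σ i = j, w i = a.2 := fun j ↦ by
    simp [← ha j, Prod.snd_sum]
  have hmoment : ∀ j, ∑ i with σ i = j, w i • p i = a.1 := fun j ↦ by
    simp [← ha j, Prod.fst_sum]
  obtain ⟨i, -, hi⟩ : ∃ i ∈ Finset.univ, 0 < w i :=
    Finset.exists_lt_of_sum_lt (by rw [hw.2, Finset.sum_const_zero]; exact one_pos)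
  have hpos : 0 < a.2 := by
    rw [← hmass (σ i)]
    exact Finset.sum_pos' (fun i _ ↦ hw.1 i) ⟨i, by simp, hi⟩
  refine ⟨a.2⁻¹ • a.1, mem_iInter.2 fun j ↦ ?_⟩
  have hcenter : ({i | σ i = j} : Finset ι).centerMass w p = a.2⁻¹ • a.1 := by
    rw [Finset.centerMass, hmass, hmoment]
  rw [← hcenter]
  exact Finset.centerMass_mem_convexHull _ (fun i _ ↦ hw.1 i) (hmass j ▸ hpos)
    fun i hi ↦ mem_image_of_mem p (Finset.mem_filter.1 hi).2

end OrderedField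

theorem tverberg_theorem_general {E ι κ : Type*} [AddCommGroup E] [Module ℝ E]
    [FiniteDimensional ℝ E] [Fintype ι] [Fintype κ] [Nonempty κ] (p : ι → E)
    (hcard : (finrank ℝ E + 1) * (Fintype.card κ - 1) < Fintype.card ι) :
    ∃ σ : ι → κ, (⋂ j, convexHull ℝ (p '' (σ ⁻¹' {j}))).Nonempty := by
  classical
  have hdim : finrank ℝ (SarkariaSpace ℝ κ (E × ℝ)) < Fintype.card ι := by
    rwa [finrank_sarkariaSpace, finrank_prod, finrank_self, mul_comm]
  obtain ⟨c, hc, hzero⟩ := colorful_caratheodory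
    (fun i ↦ zero_mem_convexHull_range_sarkariaMap (𝕜 := ℝ) (κ := κ) (p i, (1 : ℝ))) hdim
  choose σ hσ using fun i ↦ hc i (mem_univ i)
  obtain ⟨w, hw, hsum⟩ := mem_convexHull_range_iff_exists_stdSimplex.1 hzero
  simp only [← hσ, ← map_smul] at hsum
  obtain ⟨a, ha⟩ := (sum_sarkariaMap_eq_zero_iff ℝ (E × ℝ) σ _).1 hsum
  exact ⟨σ, nonempty_iInter_convexHull_image_fiber_of_sum_eq hw ha⟩

/-- **Classical Tverberg Theorem.** Any `m = (d+1)(r-1)+1` points in `ℝ^d` can be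
partitioned into `r` parts whose convex hulls have a common point. -/
theorem tverberg_theorem (d r : ℕ) (hd : 1 ≤ d) (hr : 1 ≤ r)
    (m : ℕ) (hm : m = (d + 1) * (r - 1) + 1)
    (p : Fin m → EuclideanSpace ℝ (Fin d)) :
    ∃ σ : Fin m → Fin r,
      (⋂ j : Fin r, convexHull ℝ (p '' {i | σ i = j})).Nonempty := by
  have : NeZero r := ⟨by lia⟩
  exact tverberg_theorem_general p (by simp [hm])
end

section
/- Let d ≥ 1 and r ≥ 1 be integers, let m = (d+1)(r-1), and let f : Δ^m → ℝ^d be a continuous map, where Δ^m is the standard m-simplex. Then the intersection ⋂ f(Δ_S), taken over all subsets S of the vertex index set {0, 1, …, m} with |S| = d(r-1)+1 (i.e., over all faces of Δ^m of dimension d(r-1)), is nonempty. -/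
/-!
Suppose the images of the faces `Δ_S` have no common point. The complements of these images then
cover `f(Δ)`, and since `f(Δ)` lies in a `d`-dimensional space, this covering shrinks to an open
covering `V_S` of multiplicity at most `d + 1`. Let `W_i` be the union of the `f⁻¹(V_S)` over the
`S` that omit the vertex `i`. A point of `f⁻¹(V_S)` lies outside `Δ_S`, hence has a positive
coordinate `i ∉ S`, so the `W_i` satisfy the hypothesis of the Knaster–Kuratowski–Mazurkiewicz
theorem and have a common point `y`. The at most `d + 1` sets `S` with `f y ∈ V_S` then have
complements covering all the vertices, but these complements are too small for that.

The Knaster–Kuratowski–Mazurkiewicz theorem is deduced from Scarf's lemma on dominant sets, applied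
to a fine net of points of the simplex, which needs no triangulation. Scarf's lemma is the parity
argument of Sperner's lemma: a set of one fewer alternatives than utilities extends to a dominant
set in an even number of ways, except for the one boundary facet consisting of slack alternatives.
That `ℝ^d` has covering dimension at most `d` is seen from `d + 1` translated cubical grids: by the
pigeonhole principle no point lies on the walls of all of them.
-/

section Scarf

open Finset

theorem card_filter_image_erase_eq_two {α β : Type*} [DecidableEq α] [DecidableEq β]
    {g : α → β} {A : Finset α} {B : Finset β} (himage : A.image g = B) (hcard : #A = #B + 1) :
    #{a ∈ A | (A.erase a).image g = B} = 2 := by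
  obtain ⟨a, ha, b, hb, hab, hgab⟩ := exists_ne_map_eq_of_card_lt_of_maps_to (t := B)
    (by omega) (fun x hx => himage ▸ mem_image_of_mem g hx)
  have image_erase : ∀ {x y}, x ∈ A → y ∈ A → y ≠ x → g y = g x → (A.erase x).image g = B := by
    intro x y hx hy hyx hg
    rw [← himage, ← insert_erase hx, image_insert, erase_insert (notMem_erase x A),
      insert_eq_of_mem (hg ▸ mem_image_of_mem g (mem_erase.2 ⟨hyx, hy⟩))]
  have injOn_erase : ∀ {x}, x ∈ A → (A.erase x).image g = B → Set.InjOn g (A.erase x) := by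
    intro x hx hxB
    rw [← card_image_iff, hxB, card_erase_of_mem hx, hcard, Nat.add_sub_cancel]
  suffices {x ∈ A | (A.erase x).image g = B} = {a, b} by rw [this, card_pair hab]
  ext x
  simp only [mem_filter, mem_insert, mem_singleton]
  constructor
  · rintro ⟨hx, hxB⟩
    by_contra! hne
    exact hab (injOn_erase hx hxB (mem_erase.2 ⟨hne.1.symm, ha⟩) (mem_erase.2 ⟨hne.2.symm, hb⟩)
      hgab)
  · rintro (rfl | rfl)
    · exact ⟨ha, image_erase ha hb hab.symm hgab.symm⟩
    · exact ⟨hb, image_erase hb ha hab hgab⟩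

theorem sum_card_filter_erase_eq_sum_card_filter_insert {X : Type*} [Fintype X] [DecidableEq X]
    (P D : Finset X → Prop) [DecidablePred P] [DecidablePred D] :
    ∑ R with P R, #{x ∈ R | D (R.erase x)} = ∑ Q with D Q, #{x | x ∉ Q ∧ P (insert x Q)} := by
  rw [← card_sigma, ← card_sigma]
  refine card_nbij' (fun p => ⟨p.1.erase p.2, p.2⟩) (fun p => ⟨insert p.2 p.1, p.2⟩) ?_ ?_ ?_ ?_ <;>
    rintro ⟨R, x⟩ h <;>
    simp only [coe_sigma, Set.mem_sigma_iff, mem_coe, mem_filter, mem_univ, true_and] at h ⊢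
  · simpa [insert_erase h.2.1] using ⟨h.2.2, h.1⟩
  · simpa [erase_insert h.2.1] using ⟨h.2.2, h.1⟩
  · rw [insert_erase h.2.1]
  · rw [erase_insert h.2.1]

variable {I X α : Type*} [LinearOrder α] {v : I → X → α} {s : I → X} {Q R : Finset X}

/-- A set `R` is dominant for the utility functions `v i` if no alternative `y` is strictly better
for every `i` than the worst element of `R`. Dominant sets of `Fintype.card I` elements play the
role of the full-dimensional cells of a triangulation. -/
def IsDominant (v : I → X → α) (R : Finset X) : Prop :=
  ∀ y, ∃ i, ∀ x ∈ R, v i y ≤ v i x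

/-- `s i` is the slack alternative of the `i`-th utility: the worst one for `v i`, and better than
every proper alternative for the other utilities. Slack alternatives are the artificial vertices
that complete the boundary cells. -/
structure IsSlack (v : I → X → α) (s : I → X) : Prop where
  le : ∀ i x, v i (s i) ≤ v i x
  lt : ∀ {i j x}, i ≠ j → x ∉ Set.range s → v i x < v i (s j)

/-- `μ i` is a worst element of `Q` for the utility `v i`. -/
def IsRowMin (v : I → X → α) (Q : Finset X) (μ : I → X) : Prop :=
  ∀ i, μ i ∈ Q ∧ ∀ q ∈ Q, v i (μ i) ≤ v i q

/-- `x` results from the pivot step relaxing the row `e`: it is the `v e`-best alternative among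
those that beat the thresholds `μ j` for all `j ≠ e`. -/
def IsPivot (v : I → X → α) (μ : I → X) (e : I) (x : X) : Prop :=
  (∀ j ≠ e, v j (μ j) < v j x) ∧ ∀ y, (∀ j ≠ e, v j (μ j) < v j y) → v e y ≤ v e x

theorem IsDominant.anti (hR : IsDominant v R) (h : Q ⊆ R) : IsDominant v Q :=
  fun y => (hR y).imp fun _ hi x hx => hi x (h hx)

theorem IsDominant.le_of_forall_exists_lt {e : I} {y : X} (hR : IsDominant v R)
    (hy : ∀ j ≠ e, ∃ x ∈ R, v j x < v j y) : ∀ x ∈ R, v e y ≤ v e x := by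
  obtain ⟨i, hi⟩ := hR y
  obtain rfl : i = e := by
    by_contra hie
    obtain ⟨x, hx, hxy⟩ := hy i hie
    exact (hi x hx).not_gt hxy
  exact hi

theorem exists_isRowMin (v : I → X → α) (hQ : Q.Nonempty) : ∃ μ, IsRowMin v Q μ := by
  choose μ hμ using fun i => exists_min_image Q (v i) hQ
  exact ⟨μ, hμ⟩

variable {μ : I → X} {e e' : I} {x x' : X}

theorem IsRowMin.image_univ [Fintype I] [DecidableEq X] (hμ : IsRowMin v Q μ)
    (hv : ∀ i, Function.Injective (v i)) (hQ : IsDominant v Q) : univ.image μ = Q := by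
  ext q
  simp only [mem_image, mem_univ, true_and]
  refine ⟨fun ⟨i, hi⟩ => hi ▸ (hμ i).1, fun hq => ?_⟩
  obtain ⟨i, hi⟩ := hQ q
  exact ⟨i, hv i (((hμ i).2 q hq).antisymm (hi _ (hμ i).1))⟩

theorem IsPivot.row_unique (hμ : IsRowMin v Q μ) (hQ : IsDominant v Q)
    (h : IsPivot v μ e x) (h' : IsPivot v μ e' x) : e = e' := by
  by_contra hne
  exact (hQ.le_of_forall_exists_lt (fun j hj => ⟨μ j, (hμ j).1, h.1 j hj⟩) _ (hμ e).1).not_gt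
    (h'.1 e hne)

theorem IsPivot.unique (hv : ∀ i, Function.Injective (v i)) (h : IsPivot v μ e x)
    (h' : IsPivot v μ e x') : x = x' :=
  hv e ((h'.2 x h.1).antisymm (h.2 x' h'.1))

theorem IsPivot.notMem [Fintype I] [DecidableEq I] [DecidableEq X]
    (he : (univ.erase e).image μ = Q) (h : IsPivot v μ e x) : x ∉ Q := by
  rw [← he]
  intro hx
  obtain ⟨i, hi, rfl⟩ := mem_image.1 hx
  exact (h.1 i (ne_of_mem_erase hi)).false

theorem IsPivot.isDominant_insert [DecidableEq X] (hμ : IsRowMin v Q μ) (hQ : IsDominant v Q)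
    (h : IsPivot v μ e x) : IsDominant v (insert x Q) := by
  intro y
  simp only [forall_mem_insert]
  by_cases hy : ∀ j ≠ e, v j (μ j) < v j y
  · exact ⟨e, h.2 y hy, hQ.le_of_forall_exists_lt fun j hj => ⟨μ j, (hμ j).1, hy j hj⟩⟩
  · push Not at hy
    obtain ⟨j, hje, hj⟩ := hy
    exact ⟨j, hj.trans (h.1 j hje).le, fun q hq => hj.trans ((hμ j).2 q hq)⟩

theorem exists_isPivot_of_isDominant_insert [Fintype I] [DecidableEq I] [DecidableEq X]
    (hv : ∀ i, Function.Injective (v i)) (hμ : IsRowMin v Q μ) (hcard : #Q + 1 = Fintype.card I)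
    (hx : x ∉ Q) (hxQ : IsDominant v (insert x Q)) :
    ∃ e, (univ.erase e).image μ = Q ∧ IsPivot v μ e x := by
  have hlt : ∀ q ∈ Q, ∃ i, μ i = q ∧ v i (μ i) < v i x := by
    intro q hq
    obtain ⟨i, hi⟩ := hxQ q
    rw [forall_mem_insert] at hi
    obtain rfl : μ i = q := hv i (((hμ i).2 q hq).antisymm (hi.2 _ (hμ i).1))
    exact ⟨i, rfl, hi.1.lt_of_ne fun h => hx (hv i h ▸ hq)⟩
  obtain ⟨e, he⟩ : ∃ e, v e x ≤ v e (μ e) := by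
    obtain ⟨e, he⟩ := hxQ.anti (subset_insert x Q) x
    exact ⟨e, he _ (hμ e).1⟩
  have himage : (univ.filter fun i => v i (μ i) < v i x).image μ = Q := by
    ext q
    simp only [mem_image, mem_filter, mem_univ, true_and]
    exact ⟨fun ⟨i, _, hi⟩ => hi ▸ (hμ i).1, fun hq => (hlt q hq).imp fun i hi => hi.symm⟩
  have hrows : (univ.filter fun i => v i (μ i) < v i x) = univ.erase e := by
    refine eq_of_subset_of_card_le (fun i hi => ?_) ?_
    · rw [mem_erase]
      refine ⟨?_, mem_univ i⟩
      rintro rfl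
      exact (mem_filter.1 hi).2.not_ge he
    · rw [card_erase_of_mem (mem_univ e), card_univ, ← hcard, Nat.add_sub_cancel, ← himage]
      exact card_image_le
  refine ⟨e, hrows ▸ himage, fun j hj => ?_, fun y hy => ?_⟩
  · have hj' : j ∈ univ.filter fun i => v i (μ i) < v i x := by
      rw [hrows]
      exact mem_erase.2 ⟨hj, mem_univ j⟩
    exact (mem_filter.1 hj').2
  · exact hxQ.le_of_forall_exists_lt (fun j hj => ⟨μ j, mem_insert_of_mem (hμ j).1, hy j hj⟩) x
      (mem_insert_self x Q)

theorem IsSlack.exists_isPivot [Finite X] (hs : IsSlack v s) (hμ : IsRowMin v Q μ)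
    (hQ : ∃ t ∈ Q, t ∉ Set.range s) (e : I) : ∃ x, IsPivot v μ e x := by
  obtain ⟨t, htQ, ht⟩ := hQ
  obtain ⟨x, hx, hmax⟩ := Set.exists_max_image {y | ∀ j ≠ e, v j (μ j) < v j y} (v e)
    (Set.toFinite _) ⟨s e, fun j hj => ((hμ j).2 t htQ).trans_lt (hs.lt hj ht)⟩
  exact ⟨x, hx, hmax⟩

open scoped Classical in
theorem IsSlack.even_card_isDominant_insert [Fintype I] [Fintype X] [DecidableEq X]
    (hv : ∀ i, Function.Injective (v i)) (hs : IsSlack v s) (hcard : #Q + 1 = Fintype.card I)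
    (hQs : ∃ t ∈ Q, t ∉ Set.range s) :
    Even #{x | x ∉ Q ∧ IsDominant v (insert x Q)} := by
  by_cases hQ : IsDominant v Q
  swap
  · rw [filter_eq_empty_iff.2 fun x _ hx => hQ (hx.2.anti (subset_insert x Q)), card_empty]
    exact Even.zero
  obtain ⟨μ, hμ⟩ := exists_isRowMin v (hQs.imp fun _ => And.left)
  choose p hp using hs.exists_isPivot hμ hQs
  have hpivots : ({x | x ∉ Q ∧ IsDominant v (insert x Q)} : Finset X) =
      image p {e | (univ.erase e).image μ = Q} := by
    ext x
    simp only [mem_filter, mem_univ, true_and, mem_image]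
    constructor
    · rintro ⟨hx, hxQ⟩
      obtain ⟨e, he, hpe⟩ := exists_isPivot_of_isDominant_insert hv hμ hcard hx hxQ
      exact ⟨e, he, (hp e).unique hv hpe⟩
    · rintro ⟨e, he, rfl⟩
      exact ⟨(hp e).notMem he, (hp e).isDominant_insert hμ hQ⟩
  have hinj : Function.Injective p := fun e e' h => (hp e).row_unique hμ hQ (h ▸ hp e')
  rw [hpivots, card_image_of_injective _ hinj,
    card_filter_image_erase_eq_two (hμ.image_univ hv hQ) (by rw [card_univ, hcard])]
  exact even_two

section Doors

variable [Fintype I] [DecidableEq I] [DecidableEq X]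

theorem IsSlack.isDominant_insert_iff (hv : ∀ i, Function.Injective (v i)) (hs : IsSlack v s)
    (hproper : ∃ t, t ∉ Set.range s) (i₀ : I) :
    x ∉ (univ.erase i₀).image s ∧ IsDominant v (insert x ((univ.erase i₀).image s)) ↔
      x ∉ Set.range s ∧ ∀ y ∉ Set.range s, v i₀ y ≤ v i₀ x := by
  have eq_of_le : ∀ {i y}, v i y ≤ v i (s i) → y = s i := fun {i y} h =>
    hv i (h.antisymm (hs.le i y))
  simp only [IsDominant, forall_mem_insert, forall_mem_image, mem_erase, mem_univ, and_true]
  constructor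
  · rintro ⟨hx, hdom⟩
    have hbest : ∀ y ∉ Set.range s, v i₀ y ≤ v i₀ x := by
      intro y hy
      obtain ⟨i, hix, his⟩ := hdom y
      obtain rfl : i = i₀ := by
        by_contra hi
        exact hy ⟨i, (eq_of_le (his hi)).symm⟩
      exact hix
    refine ⟨?_, hbest⟩
    rintro ⟨k, rfl⟩
    obtain rfl : k = i₀ := by
      by_contra hk
      exact hx (mem_image_of_mem s (mem_erase.2 ⟨hk, mem_univ k⟩))
    obtain ⟨t, ht⟩ := hproper
    exact ht ⟨k, (eq_of_le (hbest t ht)).symm⟩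
  · rintro ⟨hx, hbest⟩
    refine ⟨fun h => ?_, fun y => ?_⟩
    · obtain ⟨k, -, rfl⟩ := mem_image.1 h
      exact hx ⟨k, rfl⟩
    · by_cases hy : y ∈ Set.range s
      · obtain ⟨k, rfl⟩ := hy
        exact ⟨k, hs.le k x, fun _ _ => hs.le k _⟩
      · exact ⟨i₀, hbest y hy, fun _ hk => (hs.lt (Ne.symm hk) hy).le⟩

/-- The doors of the parity argument: facets whose labels are exactly those different from `i₀`,
each occurring once. -/
def IsDoor (c : X → I) (i₀ : I) (Q : Finset X) : Prop :=
  Q.image c = univ.erase i₀ ∧ #Q + 1 = Fintype.card I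

variable {c : X → I} {i₀ : I}

open scoped Classical in
theorem even_card_isDoor_erase (hR : R.image c ≠ univ) :
    Even #{x ∈ R | IsDoor c i₀ (R.erase x)} := by
  have hdoor : ∀ x ∈ R, IsDoor c i₀ (R.erase x) ↔
      (R.erase x).image c = univ.erase i₀ ∧ #R = Fintype.card I := fun x hx => by
    rw [IsDoor, card_erase_add_one hx]
  by_cases hRc : R.image c = univ.erase i₀ ∧ #R = Fintype.card I
  · simp only [filter_congr hdoor, hRc.2, and_true]
    rw [card_filter_image_erase_eq_two hRc.1
      (by rw [card_erase_add_one (mem_univ _), hRc.2, card_univ])]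
    exact even_two
  · rw [filter_eq_empty_iff.2, card_empty]
    · exact Even.zero
    · intro x hx hxdoor
      obtain ⟨himage, hcard⟩ := (hdoor x hx).1 hxdoor
      have hRimage : R.image c = insert (c x) (univ.erase i₀) := by
        rw [← himage, ← image_insert, insert_erase hx]
      by_cases hcx : c x = i₀
      · exact hR (by rw [hRimage, hcx, insert_erase (mem_univ _)])
      · exact hRc ⟨by rw [hRimage, insert_eq_of_mem (mem_erase.2 ⟨hcx, mem_univ _⟩)], hcard⟩

theorem isDoor_image_erase (hc : Function.LeftInverse c s) (i₀ : I) :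
    IsDoor c i₀ ((univ.erase i₀).image s) := by
  refine ⟨by rw [image_image, hc.comp_eq_id, image_id], ?_⟩
  rw [card_image_of_injective _ hc.injective, card_erase_add_one (mem_univ _), card_univ]

theorem IsDoor.eq_image_erase (hc : Function.LeftInverse c s) (hQ : IsDoor c i₀ Q)
    (hQs : ∀ q ∈ Q, q ∈ Set.range s) : Q = (univ.erase i₀).image s := by
  rw [← hQ.1, image_image]
  refine (image_congr fun q hq => ?_).trans image_id |>.symm
  obtain ⟨k, rfl⟩ := hQs q hq
  rw [Function.comp_apply, hc k, id]

open scoped Classical in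
theorem IsSlack.card_isDominant_insert_eq_one [Fintype X] (hv : ∀ i, Function.Injective (v i))
    (hs : IsSlack v s) (hproper : ∃ t, t ∉ Set.range s) (i₀ : I) :
    #{x | x ∉ (univ.erase i₀).image s ∧
      IsDominant v (insert x ((univ.erase i₀).image s))} = 1 := by
  simp only [hs.isDominant_insert_iff hv hproper i₀]
  obtain ⟨x, hx, hmax⟩ := Set.exists_max_image (Set.range s)ᶜ (v i₀) (Set.toFinite _) hproper
  rw [card_eq_one]
  refine ⟨x, eq_singleton_iff_unique_mem.2 ⟨mem_filter.2 ⟨mem_univ _, hx, hmax⟩, fun y hy => ?_⟩⟩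
  obtain ⟨hy, hymax⟩ := (mem_filter.1 hy).2
  exact hv i₀ ((hmax y hy).antisymm (hymax x hx))

end Doors

theorem IsSlack.exists_isDominant_image_eq_univ [Fintype I] [DecidableEq I] [Finite X]
    [Nonempty I] (hv : ∀ i, Function.Injective (v i)) (hs : IsSlack v s)
    (hproper : ∃ t, t ∉ Set.range s) (hc : Function.LeftInverse c s) :
    ∃ R, IsDominant v R ∧ R.image c = univ := by
  classical
  have := Fintype.ofFinite X
  by_contra! hR
  obtain ⟨i₀⟩ := ‹Nonempty I›
  have heven : Even (∑ R with IsDominant v R, #{x ∈ R | IsDoor c i₀ (R.erase x)}) :=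
    even_sum _ fun R hRdom => even_card_isDoor_erase (hR R (mem_filter.1 hRdom).2)
  have hodd : Odd (∑ Q with IsDoor c i₀ Q, #{x | x ∉ Q ∧ IsDominant v (insert x Q)}) := by
    rw [← add_sum_erase _ _ (mem_filter.2 ⟨mem_univ _, isDoor_image_erase hc i₀⟩),
      hs.card_isDominant_insert_eq_one hv hproper]
    refine odd_one.add_even (even_sum _ fun Q hQ => ?_)
    obtain ⟨hne, hQdoor⟩ := mem_erase.1 hQ
    replace hQdoor := (mem_filter.1 hQdoor).2
    refine hs.even_card_isDominant_insert hv hQdoor.2 ?_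
    by_contra! hQs
    exact hne (hQdoor.eq_image_erase hc hQs)
  rw [sum_card_filter_erase_eq_sum_card_filter_insert (IsDominant v) (IsDoor c i₀)] at heven
  exact Nat.not_even_iff_odd.2 hodd heven

variable {T β : Type*}

/-- The utility `u i`, with values in `WithTop (WithBot β)`, extended to the slack alternatives
`Sum.inr j`. The second component is an enumeration that breaks ties. -/
noncomputable def slackUtility [Fintype I] [Fintype T] [DecidableEq I] (u : I → T → β) (i : I)
    (x : T ⊕ I) : WithTop (WithBot β) ×ₗ Fin (Fintype.card (T ⊕ I)) :=
  toLex (x.elim (fun a => ((u i a : WithBot β) : WithTop (WithBot β)))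
    fun j => if i = j then ⊥ else ⊤, Fintype.equivFin _ x)

theorem injective_slackUtility [Fintype I] [Fintype T] [DecidableEq I] (u : I → T → β) (i : I) :
    Function.Injective (slackUtility u i) := fun _ _ h =>
  (Fintype.equivFin _).injective (congrArg Prod.snd (toLex_inj.1 h))

variable [LinearOrder β]

theorem isSlack_slackUtility [Fintype I] [Fintype T] [DecidableEq I] (u : I → T → β) :
    IsSlack (slackUtility u) Sum.inr := by
  constructor
  · rintro i (a | k)
    · refine (Prod.Lex.toLex_lt_toLex.2 (.inl ?_)).le
      simp only [Sum.elim_inr, Sum.elim_inl, if_true]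
      exact WithTop.coe_lt_coe.2 (WithBot.bot_lt_coe (u i a))
    · obtain rfl | hik := eq_or_ne i k
      · exact le_rfl
      · exact (Prod.Lex.toLex_lt_toLex.2 (.inl (by simp [hik]))).le
  · rintro i j (a | k) hij hx
    · exact Prod.Lex.toLex_lt_toLex.2 (.inl (by simp [hij, WithTop.coe_lt_top]))
    · exact absurd ⟨k, rfl⟩ hx

theorem scarf_lemma [Finite T] [Nonempty T] [Finite I] (u : I → T → β) (c : T → I) :
    ∃ σ : Finset T, ∀ y, ∃ z ∈ σ, ∀ x ∈ σ, u (c z) y ≤ u (c z) x := by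
  classical
  have := Fintype.ofFinite I
  have := Fintype.ofFinite T
  have : Nonempty I := ‹Nonempty T›.map c
  obtain ⟨R, hR, hRc⟩ := (isSlack_slackUtility u).exists_isDominant_image_eq_univ
    (c := Sum.elim c id) (injective_slackUtility u)
    ⟨Sum.inl (Classical.arbitrary T), by simp⟩ fun _ => rfl
  refine ⟨R.toLeft, fun y => ?_⟩
  obtain ⟨i, hi⟩ := hR (Sum.inl y)
  have hfst : ∀ x ∈ R, (ofLex (slackUtility u i (.inl y))).1 ≤ (ofLex (slackUtility u i x)).1 :=
    fun x hx => Prod.Lex.monotone_fst _ _ (hi x hx)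
  obtain ⟨z | j, hzR, rfl⟩ := mem_image.1 (hRc ▸ mem_univ i)
  · exact ⟨z, mem_toLeft.2 hzR, fun x hx => by
      simpa [slackUtility] using hfst _ (mem_toLeft.1 hx)⟩
  · simpa [slackUtility] using hfst _ hzR

end Scarf

section KKM

open Metric

theorem exists_threshold_of_finite {ι : Type*} [Finite ι] {t : Set (ι → ℝ)} (ht : t.Finite)
    (hne : t.Nonempty) (hnonneg : ∀ y ∈ t, 0 ≤ y) (c : (ι → ℝ) → ι) :
    ∃ m ≥ 0, (∀ y ∈ t, ∃ i, y i ≤ m i) ∧ ∃ σ ⊆ t, σ.Nonempty ∧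
      (∀ x ∈ σ, m ≤ x) ∧ ∀ i, m i = 0 ∨ ∃ x ∈ σ, c x = i := by
  classical
  have := ht.to_subtype
  have := hne.to_subtype
  obtain ⟨σ, hσ⟩ := scarf_lemma (fun i (x : t) => x.1 i) fun x => c x
  have hσne : σ.Nonempty := (hσ (Classical.arbitrary t)).imp fun _ => And.left
  obtain ⟨μ, hμ⟩ := exists_isRowMin (fun i (x : t) => x.1 i) hσne
  let m : ι → ℝ := fun i => if ∃ z ∈ σ, c z = i then (μ i).1 i else 0
  refine ⟨m, fun i => ?_, fun y hy => ?_, Subtype.val '' (σ : Set t), by simp,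
    hσne.to_set.image _, ?_, fun i => ?_⟩
  · simp only [m]
    split_ifs
    exacts [hnonneg _ (μ i).2 i, le_rfl]
  · obtain ⟨z, hz, hzy⟩ := hσ ⟨y, hy⟩
    refine ⟨c z, ?_⟩
    simp only [m, if_pos (⟨z, hz, rfl⟩ : ∃ w ∈ σ, c w = c z)]
    exact hzy _ (hμ _).1
  · rintro _ ⟨x, hx, rfl⟩ i
    simp only [m]
    split_ifs
    exacts [(hμ i).2 x hx, hnonneg _ x.2 i]
  · by_cases hi : ∃ z ∈ σ, c z = i
    · obtain ⟨z, hz, hzi⟩ := hi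
      exact .inr ⟨z, ⟨z, hz, rfl⟩, hzi⟩
    · exact .inl (if_neg hi)

variable {ι : Type*} [Fintype ι]

theorem one_lt_sum_add_of_net [Nonempty ι] {t : Set (ι → ℝ)} {ρ : ℝ} (hρ : 0 ≤ ρ)
    (hcover : stdSimplex ℝ ι ⊆ ⋃ y ∈ t, ball y ρ) {m : ι → ℝ} (hm : 0 ≤ m)
    (h : ∀ y ∈ t, ∃ i, y i ≤ m i) : 1 < ∑ i, (m i + ρ) := by
  -- Otherwise `m + ρ` can be raised to a point of the simplex, and a net point near it exceeds `m`.
  by_contra! hsum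
  set slack := 1 - ∑ i, (m i + ρ) with hslack
  have hslack_nonneg : 0 ≤ slack / Fintype.card ι := div_nonneg (sub_nonneg.2 hsum) (by positivity)
  let z : ι → ℝ := fun i => m i + ρ + slack / Fintype.card ι
  have hz : z ∈ stdSimplex ℝ ι := by
    refine ⟨fun i => add_nonneg (add_nonneg (hm i) hρ) hslack_nonneg, ?_⟩
    rw [Finset.sum_add_distrib, Finset.sum_const, Finset.card_univ, nsmul_eq_mul,
      mul_div_cancel₀ _ (by positivity), hslack, add_sub_cancel]
  obtain ⟨y, hy, hzy⟩ := Set.mem_iUnion₂.1 (hcover hz)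
  obtain ⟨i, hi⟩ := h y hy
  have hdist : |z i - y i| < ρ := (dist_le_pi_dist z y i).trans_lt hzy
  linarith [le_abs_self (z i - y i)]

theorem lt_add_of_mem_stdSimplex {x m : ι → ℝ} {ε : ℝ} (hx : x ∈ stdSimplex ℝ ι)
    (hmx : m ≤ x) (hm : 1 < ∑ i, m i + ε) (i : ι) : x i < m i + ε := by
  have : x i - m i ≤ ∑ j, (x j - m j) :=
    Finset.single_le_sum (fun j _ => sub_nonneg.2 (hmx j)) (Finset.mem_univ i)
  rw [Finset.sum_sub_distrib, hx.2] at this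
  linarith

theorem exists_mem_stdSimplex_forall_lt_or_exists_dist_lt [Nonempty ι] (c : (ι → ℝ) → ι) {ε : ℝ}
    (hε : 0 < ε) : ∃ p ∈ stdSimplex ℝ ι, ∀ i, p i < ε ∨
      ∃ q ∈ stdSimplex ℝ ι, c q = i ∧ dist q p < ε := by
  set ρ := ε / Fintype.card ι with hρ_def
  have hρ : 0 < ρ := by positivity
  obtain ⟨t, htΔ, htfin, hcover⟩ := (isCompact_stdSimplex ℝ ι).finite_cover_balls hρ
  obtain ⟨y₀, hy₀, -⟩ := Set.mem_iUnion₂.1 (hcover (Classical.arbitrary (stdSimplex ℝ ι)).2)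
  obtain ⟨m, hm, hmt, σ, hσt, ⟨p, hp⟩, hmσ, hcσ⟩ :=
    exists_threshold_of_finite htfin ⟨y₀, hy₀⟩ (fun y hy => (htΔ hy).1) c
  have hsum : 1 < ∑ i, m i + ε := by
    have := one_lt_sum_add_of_net hρ.le hcover hm hmt
    rwa [Finset.sum_add_distrib, Finset.sum_const, Finset.card_univ, nsmul_eq_mul, hρ_def,
      mul_div_cancel₀ _ (by positivity)] at this
  have lt_m : ∀ x ∈ σ, ∀ i, x i < m i + ε := fun x hx =>
    lt_add_of_mem_stdSimplex (htΔ (hσt hx)) (hmσ x hx) hsum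
  refine ⟨p, htΔ (hσt hp), fun i => (hcσ i).imp (fun hi => ?_) ?_⟩
  · simpa [hi] using lt_m p hp i
  · rintro ⟨q, hq, hqi⟩
    refine ⟨q, htΔ (hσt hq), hqi, (dist_pi_lt_iff hε).2 fun j => ?_⟩
    rw [Real.dist_eq, abs_sub_lt_iff]
    constructor <;> linarith [lt_m p hp j, lt_m q hq j, hmσ p hp j, hmσ q hq j]

theorem kkm_of_isOpen [Nonempty ι] {W : ι → Set (ι → ℝ)} (hW : ∀ i, IsOpen (W i))
    (hcover : ∀ y ∈ stdSimplex ℝ ι, ∃ i, 0 < y i ∧ y ∈ W i) :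
    ∃ y ∈ stdSimplex ℝ ι, ∀ i, y ∈ W i := by
  classical
  by_contra! hempty
  choose! c hc using hempty
  obtain ⟨δ, hδ, hball⟩ := lebesgue_number_lemma_of_metric (isCompact_stdSimplex ℝ ι)
    (c := fun i => {y : ι → ℝ | (0 : ℝ) < y i} ∩ W i)
    (fun i => (isOpen_lt continuous_const (continuous_apply i)).inter (hW i))
    (fun y hy => Set.mem_iUnion.2 ((hcover y hy).imp fun _ => id))
  obtain ⟨p, hp, hpc⟩ := exists_mem_stdSimplex_forall_lt_or_exists_dist_lt c hδ
  obtain ⟨k, hk⟩ := hball p hp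
  rcases hpc k with hpk | ⟨q, hq, rfl, hqp⟩
  · have hmem : Function.update p k 0 ∈ ball p δ := by
      refine (dist_pi_lt_iff hδ).2 fun j => ?_
      obtain rfl | hjk := eq_or_ne j k
      · simpa [Real.dist_eq, abs_of_nonneg (hp.1 j)] using hpk
      · simpa [hjk] using hδ
    simpa using (hk hmem).1
  · exact hc q hq (hk hqp).2

end KKM

section CoveringDimension

open Finset

variable {X Y κ : Type*} {K : Set X} {n d : ℕ}

/-- The family `V` has multiplicity at most `n` on `K`: no point of `K` lies in more than `n`
of its members. -/
def HasMultiplicityLE (K : Set X) (V : κ → Set X) (n : ℕ) : Prop :=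
  ∀ x ∈ K, ∀ s : Finset κ, (∀ k ∈ s, x ∈ V k) → #s ≤ n

/-- The Lebesgue covering dimension of `K` is at most `d`. Coverings are by open sets of the ambient
space, and the refinement is indexed like the covering itself, which loses no generality because
members of a refinement lying in the same set of the covering can be merged. -/
def CoveringDimLE [TopologicalSpace X] (K : Set X) (d : ℕ) : Prop :=
  ∀ (n : ℕ) (U : Fin n → Set X), (∀ k, IsOpen (U k)) → K ⊆ ⋃ k, U k →
    ∃ V : Fin n → Set X, (∀ k, IsOpen (V k)) ∧ (∀ k, V k ⊆ U k) ∧ K ⊆ ⋃ k, V k ∧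
      HasMultiplicityLE K V (d + 1)

theorem exists_shrinking_of_refinement [TopologicalSpace X] {Q : Type*} {U : κ → Set X}
    {W : Q → Set X} (hW : ∀ q, IsOpen (W q)) (hWU : ∀ q, ∃ k, W q ⊆ U k) (hKW : K ⊆ ⋃ q, W q)
    (hmult : HasMultiplicityLE K W n) :
    ∃ V : κ → Set X, (∀ k, IsOpen (V k)) ∧ (∀ k, V k ⊆ U k) ∧ K ⊆ ⋃ k, V k ∧
      HasMultiplicityLE K V n := by
  classical
  choose g hg using hWU
  refine ⟨fun k => ⋃ q, ⋃ _ : g q = k, W q,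
    fun k => isOpen_iUnion fun q => isOpen_iUnion fun _ => hW q,
    fun k => Set.iUnion₂_subset fun q hq => hq ▸ hg q, fun x hx => ?_, fun x hx s hs => ?_⟩
  · obtain ⟨q, hq⟩ := Set.mem_iUnion.1 (hKW hx)
    exact Set.mem_iUnion.2 ⟨g q, Set.mem_iUnion₂.2 ⟨q, rfl, hq⟩⟩
  · have : ∀ k ∈ s, ∃ q, g q = k ∧ x ∈ W q := fun k hk => by simpa using hs k hk
    choose f hgf hxf using this
    have hinj : Function.Injective fun k : s => f k k.2 := fun k l h =>
      Subtype.ext ((hgf k k.2).symm.trans ((congrArg g h).trans (hgf l l.2)))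
    rw [← card_attach, ← card_image_of_injective _ hinj]
    exact hmult x hx _ (forall_mem_image.2 fun k _ => hxf k k.2)

theorem CoveringDimLE.exists_shrinking [TopologicalSpace X] [Finite κ] (hK : CoveringDimLE K d)
    {U : κ → Set X} (hU : ∀ k, IsOpen (U k)) (hKU : K ⊆ ⋃ k, U k) :
    ∃ V : κ → Set X, (∀ k, IsOpen (V k)) ∧ (∀ k, V k ⊆ U k) ∧ K ⊆ ⋃ k, V k ∧
      HasMultiplicityLE K V (d + 1) := by
  obtain ⟨n, ⟨e⟩⟩ := Finite.exists_equiv_fin κ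
  obtain ⟨V, hV, hVU, hKV, hmult⟩ := hK n (U ∘ e.symm) (fun k => hU _)
    (hKU.trans_eq (e.symm.surjective.iUnion_comp U).symm)
  exact exists_shrinking_of_refinement hV (fun k => ⟨e.symm k, hVU k⟩) hKV hmult

theorem CoveringDimLE.of_homeomorph [TopologicalSpace X] [TopologicalSpace Y] (e : X ≃ₜ Y)
    (h : CoveringDimLE (e '' K) d) : CoveringDimLE K d := by
  intro n U hU hKU
  obtain ⟨V, hV, hVU, hKV, hmult⟩ := h n (fun k => e '' U k) (fun k => e.isOpenMap _ (hU k))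
    (by rw [← Set.image_iUnion]; exact Set.image_mono hKU)
  refine ⟨fun k => e ⁻¹' V k, fun k => (hV k).preimage e.continuous, fun k x hx => ?_, ?_,
    fun x hx s hs => hmult (e x) ⟨x, hx, rfl⟩ s hs⟩
  · exact e.injective.mem_set_image.1 (hVU k hx)
  · rwa [← Set.preimage_iUnion, ← Set.image_subset_iff]

variable {ι : Type*} {δ : ℝ} {p : Fin (d + 1) × (ι → ℤ)} {x y : ι → ℝ}

/-- For each `k`, the open cubes `shiftedCube δ (k, v)` of side `δ` tile `ℝ^ι` up to their
boundaries, the grids for different `k` being translates of each other by multiples of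
`δ / (d + 1)`. -/
def shiftedCube (δ : ℝ) (p : Fin (d + 1) × (ι → ℤ)) : Set (ι → ℝ) :=
  {x | ∀ j, x j / δ - p.1 / (d + 1) ∈ Set.Ioo (p.2 j : ℝ) (p.2 j + 1)}

theorem isOpen_shiftedCube [Finite ι] : IsOpen (shiftedCube δ p) := by
  simp only [shiftedCube, Set.ofPred_forall]
  exact isOpen_iInter_of_finite fun j => isOpen_Ioo.preimage (by fun_prop)

theorem floor_of_mem_shiftedCube (hx : x ∈ shiftedCube δ p) :
    (fun j => ⌊x j / δ - p.1 / (d + 1)⌋) = p.2 :=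
  funext fun j => Int.floor_eq_iff.2 ⟨(hx j).1.le, (hx j).2⟩

theorem hasMultiplicityLE_shiftedCube (K : Set (ι → ℝ)) :
    HasMultiplicityLE K (shiftedCube (d := d) δ) (d + 1) := by
  intro x _ s hs
  have hinj : Set.InjOn Prod.fst (s : Set (Fin (d + 1) × (ι → ℤ))) := fun p hp q hq h =>
    Prod.ext h <| by
      rw [← floor_of_mem_shiftedCube (hs p hp), ← floor_of_mem_shiftedCube (hs q hq), h]
  simpa using card_le_card_of_injOn Prod.fst (fun _ _ => mem_univ _) hinj

theorem dist_lt_of_mem_shiftedCube [Fintype ι] (hδ : 0 < δ) (hx : x ∈ shiftedCube δ p)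
    (hy : y ∈ shiftedCube δ p) : dist x y < δ := by
  refine (dist_pi_lt_iff hδ).2 fun j => ?_
  obtain ⟨hx₁, hx₂⟩ := hx j
  obtain ⟨hy₁, hy₂⟩ := hy j
  have h : |x j / δ - y j / δ| < 1 := abs_sub_lt_iff.2 ⟨by linarith, by linarith⟩
  rwa [← sub_div, abs_div, abs_of_pos hδ, div_lt_one hδ] at h

theorem eq_of_sub_div_eq_intCast {t : ℝ} {k l : Fin (d + 1)} {a b : ℤ}
    (hk : t - k / (d + 1) = a) (hl : t - l / (d + 1) = b) : k = l := by
  have h : (l : ℝ) - k = (a - b) * (d + 1) := by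
    rw [← hk, ← hl]
    field_simp
    ring
  have hdvd : ((d + 1 : ℕ) : ℤ) ∣ (l : ℤ) - k := ⟨a - b, by rw [mul_comm]; exact_mod_cast h⟩
  exact Fin.ext (Nat.ModEq.eq_of_lt_of_lt (Nat.modEq_iff_dvd.2 hdvd) k.2 l.2)

theorem exists_mem_shiftedCube [Fintype ι] (hd : Fintype.card ι ≤ d) (x : ι → ℝ) :
    ∃ p : Fin (d + 1) × (ι → ℤ), x ∈ shiftedCube δ p := by
  suffices ∃ k : Fin (d + 1), ∀ j, ∀ a : ℤ, x j / δ - k / (d + 1) ≠ a by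
    obtain ⟨k, hk⟩ := this
    exact ⟨(k, fun j => ⌊x j / δ - k / (d + 1)⌋), fun j =>
      ⟨(Int.floor_le _).lt_of_ne' (hk j _), Int.lt_floor_add_one _⟩⟩
  by_contra! hint
  choose j a ha using hint
  obtain ⟨k, l, hkl, hj⟩ := Fintype.exists_ne_map_eq_of_card_lt j (by simpa [Nat.lt_succ_iff])
  exact hkl (eq_of_sub_div_eq_intCast (ha k) (hj ▸ ha l))

theorem coveringDimLE_of_isCompact_pi [Fintype ι] {K : Set (ι → ℝ)} (hK : IsCompact K) :
    CoveringDimLE K (Fintype.card ι) := by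
  intro n U hU hKU
  obtain ⟨δ, hδ, hball⟩ := lebesgue_number_lemma_of_metric hK hU hKU
  let W : {p : Fin (Fintype.card ι + 1) × (ι → ℤ) // (shiftedCube δ p ∩ K).Nonempty} →
    Set (ι → ℝ) := fun p => shiftedCube δ p.1
  refine exists_shrinking_of_refinement (W := W) (fun _ => isOpen_shiftedCube) ?_ ?_ ?_
  · rintro ⟨p, x, hxp, hxK⟩
    exact (hball x hxK).imp fun k hk y hy => hk (dist_lt_of_mem_shiftedCube hδ hy hxp)
  · intro x hx
    obtain ⟨p, hp⟩ := exists_mem_shiftedCube le_rfl x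
    exact Set.mem_iUnion.2 ⟨⟨p, x, hp, hx⟩, hp⟩
  · intro x hx s hs
    rw [← card_map (Function.Embedding.subtype _)]
    exact hasMultiplicityLE_shiftedCube K x hx _ (by simpa using hs)

theorem coveringDimLE_finrank_of_isCompact {E : Type*} [AddCommGroup E] [Module ℝ E]
    [TopologicalSpace E] [IsTopologicalAddGroup E] [ContinuousSMul ℝ E] [T2Space E]
    [FiniteDimensional ℝ E] {K : Set E} (hK : IsCompact K) :
    CoveringDimLE K (Module.finrank ℝ E) := by
  let e : E ≃L[ℝ] (Fin (Module.finrank ℝ E) → ℝ) := .ofFinrankEq (by simp)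
  refine .of_homeomorph e.toHomeomorph ?_
  simpa using coveringDimLE_of_isCompact_pi (hK.image e.continuous)

end CoveringDimension

section CentralPoint

open Finset

variable {ι κ X : Type*} [Fintype ι] [TopologicalSpace X] {d k n : ℕ}
  {f : (ι → ℝ) → X} {V : κ → Set X} {S : κ → Finset ι}

theorem isCompact_face (S : Finset ι) : IsCompact {x ∈ stdSimplex ℝ ι | ∀ i ∉ S, x i = 0} := by
  have hclosed : IsClosed {x : ι → ℝ | ∀ i ∉ S, x i = 0} := by
    simp only [Set.ofPred_forall]
    exact isClosed_iInter fun i => isClosed_iInter fun _ =>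
      isClosed_eq (continuous_apply i) continuous_const
  exact (isCompact_stdSimplex ℝ ι).inter_right hclosed

variable [Nonempty ι]

theorem exists_mem_image_stdSimplex_forall_exists_notMem (hf : ContinuousOn f (stdSimplex ℝ ι))
    (hV : ∀ a, IsOpen (V a)) (hcover : f '' stdSimplex ℝ ι ⊆ ⋃ a, V a)
    (hVS : ∀ a, V a ⊆ (f '' {x ∈ stdSimplex ℝ ι | ∀ i ∉ S a, x i = 0})ᶜ) :
    ∃ x ∈ f '' stdSimplex ℝ ι, ∀ i, ∃ a, i ∉ S a ∧ x ∈ V a := by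
  choose U hU hfU using fun a => continuousOn_iff'.1 hf (V a) (hV a)
  have mem_U_iff : ∀ y ∈ stdSimplex ℝ ι, ∀ a, y ∈ U a ↔ f y ∈ V a := fun y hy a => by
    simpa [hy] using (Set.ext_iff.1 (hfU a) y).symm
  obtain ⟨y, hy, hyW⟩ := kkm_of_isOpen
    (W := fun i => ⋃ a, ⋃ _ : i ∉ S a, U a)
    (fun i => isOpen_iUnion fun a => isOpen_iUnion fun _ => hU a) fun y hy => by
      obtain ⟨a, ha⟩ := Set.mem_iUnion.1 (hcover ⟨y, hy, rfl⟩)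
      obtain ⟨i, hi, hyi⟩ : ∃ i ∉ S a, y i ≠ 0 := by
        by_contra! h
        exact hVS a ha ⟨y, ⟨hy, h⟩, rfl⟩
      exact ⟨i, (hy.1 i).lt_of_ne' hyi, Set.mem_iUnion₂.2 ⟨a, hi, (mem_U_iff y hy a).2 ha⟩⟩
  refine ⟨f y, ⟨y, hy, rfl⟩, fun i => ?_⟩
  obtain ⟨a, hi, ha⟩ := Set.mem_iUnion₂.1 (hyW i)
  exact ⟨a, hi, (mem_U_iff y hy a).1 ha⟩

theorem card_add_mul_le_of_forall_exists_notMem {s : Finset κ} (hs : #s ≤ n)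
    (hS : ∀ a ∈ s, #(S a) = k) (h : ∀ i, ∃ a ∈ s, i ∉ S a) :
    Fintype.card ι + n * k ≤ n * Fintype.card ι := by
  classical
  have hcover : (univ : Finset ι) ⊆ s.biUnion fun a => (S a)ᶜ := fun i _ => by simpa using h i
  have hcard : Fintype.card ι ≤ #s * (Fintype.card ι - k) :=
    (card_le_card hcover).trans
      (card_biUnion_le_card_mul _ _ _ fun a ha => by rw [card_compl, hS a ha])
  have : Fintype.card ι ≤ n * Fintype.card ι - n * k :=
    (hcard.trans (Nat.mul_le_mul_right _ hs)).trans_eq (Nat.mul_sub ..)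
  have := Fintype.card_pos (α := ι)
  omega

theorem topological_central_point_theorem_general [T2Space X]
    (hk : d * Fintype.card ι < (d + 1) * k) (hf : ContinuousOn f (stdSimplex ℝ ι))
    (hdim : CoveringDimLE (f '' stdSimplex ℝ ι) d) :
    (⋂ S ∈ {S : Finset ι | S.card = k},
      f '' {x ∈ stdSimplex ℝ ι | ∀ i ∉ S, x i = 0}).Nonempty := by
  classical
  by_contra! hempty
  let face : {S : Finset ι // #S = k} → Set X := fun S =>
    f '' {x ∈ stdSimplex ℝ ι | ∀ i ∉ S.1, x i = 0}
  have hface : ∀ S, IsOpen (face S)ᶜ := fun S =>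
    ((isCompact_face S.1).image_of_continuousOn (hf.mono fun _ => And.left)).isClosed.isOpen_compl
  have hcover : f '' stdSimplex ℝ ι ⊆ ⋃ S, (face S)ᶜ := fun x _ => by
    obtain ⟨S, hS, hxS⟩ : ∃ S : Finset ι, #S = k ∧
        x ∉ f '' {x ∈ stdSimplex ℝ ι | ∀ i ∉ S, x i = 0} := by
      by_contra! h
      exact (hempty ▸ Set.mem_iInter₂.2 h : x ∈ (∅ : Set X))
    exact Set.mem_iUnion.2 ⟨⟨S, hS⟩, hxS⟩
  obtain ⟨V, hV, hVface, hcoverV, hmult⟩ := hdim.exists_shrinking hface hcover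
  obtain ⟨x, hx, hxV⟩ := exists_mem_image_stdSimplex_forall_exists_notMem hf hV hcoverV hVface
  have := card_add_mul_le_of_forall_exists_notMem (s := univ.filter fun S => x ∈ V S)
    (hmult x hx _ fun S hS => (mem_filter.1 hS).2) (fun S _ => S.2)
    fun i => (hxV i).imp fun S hS => ⟨mem_filter.2 ⟨mem_univ S, hS.2⟩, hS.1⟩
  linarith

end CentralPoint

/-- **Topological Central Point Theorem** for the target space `ℝ^d`.
Let `m = (d+1)(r-1)` and let `f` be a continuous map from the standard `m`-simplex
to `ℝ^d`.  Then the images under `f` of all faces of `Δ^m` of dimension `d(r-1)`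
(i.e. faces spanned by vertex sets `S` with `|S| = d(r-1)+1`) have a common point. -/
theorem topological_central_point_theorem (d r : ℕ) (hd : 1 ≤ d) (hr : 1 ≤ r)
    (m : ℕ) (hm : m = (d + 1) * (r - 1))
    (f : (Fin (m + 1) → ℝ) → EuclideanSpace ℝ (Fin d))
    (hf : ContinuousOn f (stdSimplex ℝ (Fin (m + 1)))) :
    (⋂ S ∈ {S : Finset (Fin (m + 1)) | S.card = d * (r - 1) + 1},
      f '' {x ∈ stdSimplex ℝ (Fin (m + 1)) | ∀ i ∉ S, x i = 0}).Nonempty := by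
  refine topological_central_point_theorem_general (d := d) ?_ hf ?_
  · rw [hm, Fintype.card_fin]
    linarith
  · simpa using
      coveringDimLE_finrank_of_isCompact ((isCompact_stdSimplex ℝ _).image_of_continuousOn hf)
end

section
/- Let d ≥ 1 be an integer and let r be a prime power (r = p^k for some prime p and integer k ≥ 1). Set m = (d+1)r − 1 and let f : Δ^m → ℝ^d be a continuous map, where Δ^m is the standard m-simplex. Then there exist r nonempty pairwise disjoint subsets S₁, …, S_r of the vertex index set {0, 1, …, m} such that ⋂_{i=1}^{r} f(Δ_{S_i}) ≠ ∅, i.e., there exist r pairwise disjoint faces F₁, …, F_r of Δ^m with ⋂_{i=1}^{r} f(F_i) ≠ ∅. -/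
/-!
Let `G = (ℤ/p)^k`. A point of the deleted join of `|G|` copies of the simplex is a family, indexed
by `G`, of weighted points lying in pairwise disjoint faces, and `f` takes the same value at all of
them as soon as its extension to the cone over the simplex and the total weight do not depend on the
copy, that is, as soon as their Fourier coefficients at all nontrivial characters of `G` vanish.
Blocks of additional vertices turn real functions into complex ones, so that every pair of a
function and a nontrivial character `χ` contributes an equivariant map to `ℂ`, on which `G` acts
through `χ`.

The obstruction to a common zero of such maps is the product of their Euler classes in
`H^*(G; 𝔽_p)`. The Euler class of `χ` is represented by the cocycle that counts the full turns lost
when complex arguments are added. In the subring generated by the classes of degree two of the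
standard generators, a polynomial ring, it is the linear form with the coefficients of `χ`; hence
the product is nonzero, and it is detected by a chain on the deleted join coming from the tensor
product of the periodic resolutions of the cyclic factors. Subdivision does not change this value,
so that the cup product of the cocycles is nonzero on arbitrarily small simplices. Without a common
zero, however, on every small simplex some map is nonzero and varies by less than a quarter turn,
and its cocycle vanishes there.
-/

noncomputable section

namespace TopologicalTverberg

open Finsupp (single degree)

lemma sum_sum_eq_sum_diag {κ A : Type*} [LinearOrder κ] [AddCommGroup A] (s : Finset κ)
    (Y : κ → κ → A) (hY : ∀ i ∈ s, ∀ j ∈ s, i < j → Y j i = -Y i j) :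
    ∑ i ∈ s, ∑ j ∈ s, Y i j = ∑ i ∈ s, Y i i := by
  have split (i : κ) (hi : i ∈ s) :
      ∑ j ∈ s, Y i j = Y i i + (∑ j ∈ s with i < j, Y i j + ∑ j ∈ s with j < i, Y i j) := by
    rw [← Finset.add_sum_erase _ _ hi, ← Finset.sum_filter_add_sum_filter_not (s.erase i) (i < ·)]
    congr 3 <;> ext j <;> grind
  have lower : ∑ i ∈ s, ∑ j ∈ s with j < i, Y i j = ∑ i ∈ s, ∑ j ∈ s with i < j, -Y i j := by
    simp_rw [Finset.sum_filter]
    rw [Finset.sum_comm]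
    refine Finset.sum_congr rfl fun i hi ↦ Finset.sum_congr rfl fun j hj ↦ ?_
    split_ifs with h
    · exact hY i hi j hj h
    · rfl
  simp_rw [Finset.sum_congr rfl split, Finset.sum_add_distrib, lower, Finset.sum_neg_distrib,
    add_neg_cancel, add_zero]

lemma degree_sub_single {κ : Type*} {a : κ →₀ ℕ} {i : κ} (hi : a i ≠ 0) :
    degree (a - single i 1) + 1 = degree a := by
  have hle : single i 1 ≤ a := by simpa [Nat.one_le_iff_ne_zero] using hi
  conv_rhs => rw [← tsub_add_cancel_of_le hle]
  simp

section Resolution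

variable {R C κ : Type*} [CommRing R] [AddCommGroup C] [Module R C] [Fintype κ] [LinearOrder κ]

/-- The `n`-th differential of the periodic resolution of a cyclic group of order `p` whose
generator acts by `S`: alternately `S - 1` and the norm `1 + S + ⋯ + S ^ (p - 1)`, starting with
`S - 1` in degree one. It is zero in degree zero. -/
def periodicDiff (p : ℕ) (S : Module.End R C) : ℕ → Module.End R C
  | 0 => 0
  | n + 1 => if Even n then S - 1 else ∑ j ∈ Finset.range p, S ^ j

/-- The Koszul sign of the `i`-th differential in multidegree `a`. -/
def koszulSign (a : κ →₀ ℕ) (i : κ) : ℤ :=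
  (-1) ^ ∑ l with l < i, a l

/-- The differential in the `i`-th direction of the tensor product of the periodic resolutions
attached to the operators `S i`, acting on families indexed by multidegrees. Lowering a vanishing
entry of a multidegree does nothing, but `periodicDiff` vanishes there. -/
def partialDiff (p : ℕ) (S : κ → Module.End R C) (i : κ) : Module.End R ((κ →₀ ℕ) → C) :=
  LinearMap.pi fun a ↦
    koszulSign a i • periodicDiff p (S i) (a i) ∘ₗ LinearMap.proj (a - single i 1)

/-- The differential of the tensor product of the periodic resolutions attached to the operators
`S i`. -/
def totalDiff (p : ℕ) (S : κ → Module.End R C) : Module.End R ((κ →₀ ℕ) → C) :=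
  ∑ i, partialDiff p S i

lemma koszulSign_sub_single_of_le (a : κ →₀ ℕ) {i j : κ} (hij : i ≤ j) :
    koszulSign (a - single j 1) i = koszulSign a i := by
  unfold koszulSign
  congr 1
  refine Finset.sum_congr rfl fun l hl ↦ ?_
  have : l ≠ j := ((Finset.mem_filter.1 hl).2.trans_le hij).ne
  simp [this.symm]

lemma koszulSign_sub_single_of_lt {a : κ →₀ ℕ} {i j : κ} (hi : a i ≠ 0) (hij : i < j) :
    koszulSign (a - single i 1) j = -koszulSign a j := by
  have hmem : i ∈ Finset.univ.filter (· < j) := by simpa using hij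
  have hrest : ∑ l ∈ (Finset.univ.filter (· < j)).erase i, (a - single i 1 : κ →₀ ℕ) l =
      ∑ l ∈ (Finset.univ.filter (· < j)).erase i, a l :=
    Finset.sum_congr rfl fun l hl ↦ by simp [(Finset.ne_of_mem_erase hl).symm]
  obtain ⟨n, hn⟩ := Nat.exists_eq_succ_of_ne_zero hi
  unfold koszulSign
  rw [← Finset.add_sum_erase _ _ hmem, ← Finset.add_sum_erase _ a hmem, hrest]
  simp [hn, pow_add]

lemma periodicDiff_of_even (p : ℕ) (S : Module.End R C) {n : ℕ} (h0 : n ≠ 0) (hn : Even n) :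
    periodicDiff p S n = ∑ j ∈ Finset.range p, S ^ j := by
  obtain ⟨n, rfl⟩ := Nat.exists_eq_succ_of_ne_zero h0
  simp [periodicDiff, Nat.even_add_one.1 hn]

lemma periodicDiff_of_odd (p : ℕ) (S : Module.End R C) {n : ℕ} (hn : Odd n) :
    periodicDiff p S n = S - 1 := by
  obtain ⟨m, rfl⟩ := hn
  simp [periodicDiff]

lemma periodicDiff_comp_self (p : ℕ) {S : Module.End R C} (hS : S ^ p = 1) (n : ℕ) (x : C) :
    periodicDiff p S n (periodicDiff p S (n - 1) x) = 0 := by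
  have hleft : (S - 1) * ∑ j ∈ Finset.range p, S ^ j = 0 := by rw [mul_geom_sum, hS, sub_self]
  have hright : (∑ j ∈ Finset.range p, S ^ j) * (S - 1) = 0 := by rw [geom_sum_mul, hS, sub_self]
  rw [← Module.End.mul_apply]
  match n with
  | 0 | 1 => simp [periodicDiff]
  | n + 2 =>
    by_cases h : Even n
    · simp [periodicDiff, h, Nat.even_add_one, hright, -Module.End.mul_apply]
    · simp [periodicDiff, h, Nat.even_add_one, hleft, -Module.End.mul_apply]

lemma map_periodicDiff {C' : Type*} [AddCommGroup C'] [Module R C'] (p : ℕ)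
    {S : Module.End R C} {S' : Module.End R C'} {f : C →ₗ[R] C'} (hf : ∀ x, f (S x) = S' (f x))
    (n : ℕ) (x : C) : f (periodicDiff p S n x) = periodicDiff p S' n (f x) := by
  have hpow (j : ℕ) : f ((S ^ j) x) = (S' ^ j) (f x) := by
    simp_rw [Module.End.pow_apply]
    exact (Function.Semiconj.iterate_right (f := f) hf j) x
  match n with
  | 0 => simp [periodicDiff]
  | n + 1 =>
    simp only [periodicDiff]
    split_ifs
    · simp [hf]
    · simp [LinearMap.sum_apply, hpow]

@[simp]
lemma partialDiff_apply (p : ℕ) (S : κ → Module.End R C) (i : κ) (c : (κ →₀ ℕ) → C)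
    (a : κ →₀ ℕ) : partialDiff p S i c a =
      koszulSign a i • periodicDiff p (S i) (a i) (c (a - single i 1)) := rfl

lemma totalDiff_apply (p : ℕ) (S : κ → Module.End R C) (c : (κ →₀ ℕ) → C) (a : κ →₀ ℕ) :
    totalDiff p S c a =
      ∑ i, koszulSign a i • periodicDiff p (S i) (a i) (c (a - single i 1)) := by
  simp [totalDiff, LinearMap.sum_apply, Finset.sum_apply]

lemma totalDiff_apply_of_support_subset (p : ℕ) (S : κ → Module.End R C) (c : (κ →₀ ℕ) → C)
    {a : κ →₀ ℕ} {s : Finset κ} (h : a.support ⊆ s) : totalDiff p S c a =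
      ∑ i ∈ s, koszulSign a i • periodicDiff p (S i) (a i) (c (a - single i 1)) := by
  rw [totalDiff_apply]
  refine (Finset.sum_subset (Finset.subset_univ s) fun i _ hi ↦ ?_).symm
  simp [Finsupp.notMem_support_iff.1 (mt (h ·) hi), periodicDiff]

lemma partialDiff_partialDiff_self {p : ℕ} {S : κ → Module.End R C} (hS : ∀ i, S i ^ p = 1)
    (c : (κ →₀ ℕ) → C) (i : κ) : partialDiff p S i (partialDiff p S i c) = 0 := by
  ext a
  simp [periodicDiff_comp_self p (hS i)]

lemma partialDiff_anticomm (p : ℕ) {S : κ → Module.End R C} (hcomm : ∀ i j, Commute (S i) (S j))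
    (c : (κ →₀ ℕ) → C) {i j : κ} (hij : i < j) :
    partialDiff p S j (partialDiff p S i c) = -partialDiff p S i (partialDiff p S j c) := by
  ext a
  have hswap (x : C) : periodicDiff p (S j) (a j) (periodicDiff p (S i) (a i) x) =
      periodicDiff p (S i) (a i) (periodicDiff p (S j) (a j) x) :=
    map_periodicDiff p (fun x ↦ (map_periodicDiff p
      (fun y ↦ LinearMap.congr_fun (hcomm i j) y) _ x).symm) _ x
  by_cases hi : a i = 0
  · simp [hi, hij.ne, hij.ne', periodicDiff]
  · simp [hij.ne, hij.ne', koszulSign_sub_single_of_le a hij.le, koszulSign_sub_single_of_lt hi hij,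
      tsub_right_comm (b := single j 1), hswap, smul_smul, mul_comm]

lemma totalDiff_totalDiff {p : ℕ} {S : κ → Module.End R C} (hS : ∀ i, S i ^ p = 1)
    (hcomm : ∀ i j, Commute (S i) (S j)) (c : (κ →₀ ℕ) → C) :
    totalDiff p S (totalDiff p S c) = 0 := by
  simp only [totalDiff, LinearMap.sum_apply, map_sum]
  rw [sum_sum_eq_sum_diag _ _ fun i _ j _ hij ↦ by
    rw [partialDiff_anticomm p hcomm c hij, neg_neg]]
  exact Finset.sum_eq_zero fun i _ ↦ partialDiff_partialDiff_self hS c i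

lemma map_totalDiff {C' : Type*} [AddCommGroup C'] [Module R C'] (p : ℕ)
    {S : κ → Module.End R C} {S' : κ → Module.End R C'} {f : C →ₗ[R] C'}
    (hf : ∀ i x, f (S i x) = S' i (f x)) (c : (κ →₀ ℕ) → C) (a : κ →₀ ℕ) :
    f (totalDiff p S c a) = totalDiff p S' (fun b ↦ f (c b)) a := by
  simp [totalDiff_apply, map_periodicDiff p (hf _)]

lemma map_totalDiff_eq_zero {B : Type*} [AddCommGroup B] [Module R B] (p : ℕ) [CharP R p]
    {S : κ → Module.End R C} {e : C →ₗ[R] B} (he : ∀ i x, e (S i x) = e x)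
    (c : (κ →₀ ℕ) → C) (a : κ →₀ ℕ) : e (totalDiff p S c a) = 0 := by
  have htriv (n : ℕ) : periodicDiff p (1 : Module.End R B) n = 0 := by
    cases n <;> simp [periodicDiff, ← Nat.cast_smul_eq_nsmul R]
  rw [map_totalDiff p (S' := fun _ ↦ 1) (by simpa using he)]
  simp [totalDiff_apply, htriv]

lemma totalDiff_congr (p : ℕ) (S : κ → Module.End R C) {c c' : (κ →₀ ℕ) → C} {a : κ →₀ ℕ}
    (h : ∀ b, degree b + 1 = degree a → c b = c' b) : totalDiff p S c a = totalDiff p S c' a := by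
  simp only [totalDiff_apply]
  refine Finset.sum_congr rfl fun i _ ↦ ?_
  by_cases hi : a i = 0
  · simp [hi, periodicDiff]
  · rw [h _ (degree_sub_single hi)]

/-- The family `f` defined by recursion on the degree through
`f a = Q (degree a) (v a + ∂ f a)`. If the `Q n` are contractions of a complex, it provides
chain maps out of the tensor product of the periodic resolutions, and homotopies between them. -/
def conedFamily (p : ℕ) (S : κ → Module.End R C) (Q : ℕ → C →ₗ[R] C) (v : (κ →₀ ℕ) → C)
    (a : κ →₀ ℕ) : C :=
  (fun f b ↦ Q (degree b) (v b + totalDiff p S f b))^[degree a + 1] 0 a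

lemma conedFamily_eq (p : ℕ) (S : κ → Module.End R C) (Q : ℕ → C →ₗ[R] C) (v : (κ →₀ ℕ) → C)
    (a : κ →₀ ℕ) : conedFamily p S Q v a =
      Q (degree a) (v a + totalDiff p S (conedFamily p S Q v) a) := by
  rw [conedFamily, Function.iterate_succ_apply']
  congr 2
  refine totalDiff_congr p S fun b hb ↦ ?_
  rw [conedFamily, hb]

lemma periodicDiff_mem (p : ℕ) {S : Module.End R C} {N : Submodule R C}
    (hS : ∀ x ∈ N, S x ∈ N) (n : ℕ) {x : C} (hx : x ∈ N) : periodicDiff p S n x ∈ N := by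
  have hpow (j : ℕ) : (S ^ j) x ∈ N := by
    induction j with
    | zero => exact hx
    | succ j ih => rw [pow_succ', Module.End.mul_apply]; exact hS _ ih
  rcases n with _ | n
  · exact zero_mem _
  · simp only [periodicDiff]
    split_ifs
    · exact sub_mem (hS x hx) hx
    · rw [LinearMap.sum_apply]
      exact sum_mem fun j _ ↦ hpow j

lemma conedFamily_mem {p : ℕ} {S : κ → Module.End R C} {Q : ℕ → C →ₗ[R] C}
    {v : (κ →₀ ℕ) → C} {N : ℕ → Submodule R C} (hS : ∀ n i, ∀ x ∈ N n, S i x ∈ N n)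
    (hQ : ∀ n, ∀ x ∈ N n, Q n x ∈ N (n + 1)) (hv : ∀ a, v a ∈ N (degree a)) (a : κ →₀ ℕ) :
    conedFamily p S Q v a ∈ N (degree a + 1) := by
  induction h : degree a using Nat.strong_induction_on generalizing a with
  | _ n ih =>
    rw [conedFamily_eq, h]
    refine hQ n _ (add_mem (h ▸ hv a) ?_)
    rw [totalDiff_apply_of_support_subset p S _ subset_rfl]
    refine sum_mem fun i hi ↦ zsmul_mem (periodicDiff_mem p (hS n i) _ ?_) _
    have hdeg := degree_sub_single (Finsupp.mem_support_iff.1 hi)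
    rw [← h, ← hdeg]
    exact ih _ (by omega) _ rfl

section Contraction

variable {p : ℕ} {S : κ → Module.End R C} {bd : Module.End R C}

lemma boundary_conedFamily (hS : ∀ i, S i ^ p = 1) (hcomm : ∀ i j, Commute (S i) (S j))
    (hbd : ∀ i x, bd (S i x) = S i (bd x)) {Q : ℕ → C →ₗ[R] C}
    (hQ : ∀ n x, bd (Q n x) = x - Q n (bd x)) {v : (κ →₀ ℕ) → C}
    (hv : ∀ a, bd (v a) + totalDiff p S v a = 0) (a : κ →₀ ℕ) :
    bd (conedFamily p S Q v a) = v a + totalDiff p S (conedFamily p S Q v) a := by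
  induction h : degree a using Nat.strong_induction_on generalizing a with
  | _ n ih =>
    set f := conedFamily p S Q v with hf
    have hcycle : bd (v a + totalDiff p S f a) = 0 := calc
      _ = bd (v a) + totalDiff p S (fun b ↦ bd (f b)) a := by rw [map_add, map_totalDiff p hbd]
      _ = bd (v a) + totalDiff p S (v + totalDiff p S f) a := by
        rw [totalDiff_congr p S fun b hb ↦ ih (degree b) (by omega) b rfl]; rfl
      _ = 0 := by rw [map_add, totalDiff_totalDiff hS hcomm, add_zero, hv]
    rw [hf, conedFamily_eq, hQ, ← hf, hcycle, map_zero, sub_zero]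

lemma boundary_conedFamily_single (hS : ∀ i, S i ^ p = 1) (hcomm : ∀ i j, Commute (S i) (S j))
    (hbd : ∀ i x, bd (S i x) = S i (bd x)) {Q : ℕ → C →ₗ[R] C}
    (hQ : ∀ n x, bd (Q n x) = x - Q n (bd x)) {o : C} (hbo : bd o = 0) (hSo : ∀ i, S i o = o)
    (a : κ →₀ ℕ) : bd (conedFamily p S Q (Pi.single 0 o) a) =
      (Pi.single 0 o : (κ →₀ ℕ) → C) a +
        totalDiff p S (conedFamily p S Q (Pi.single 0 o)) a := by
  refine boundary_conedFamily hS hcomm hbd hQ (fun b ↦ ?_) a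
  have hbv : bd ((Pi.single 0 o : (κ →₀ ℕ) → C) b) = 0 := by
    rw [Pi.single_apply]; split_ifs <;> simp [hbo]
  have hterm (i : κ) : periodicDiff p (S i) (b i) ((Pi.single 0 o : (κ →₀ ℕ) → C)
      (b - single i 1)) = 0 := by
    match hbi : b i with
    | 0 => simp [periodicDiff]
    | 1 => rw [Pi.single_apply]; split_ifs <;> simp [periodicDiff, hSo]
    | n + 2 =>
      have : b - single i 1 ≠ 0 := fun h ↦ by simpa [hbi] using DFunLike.congr_fun h i
      simp [this]
  simp [totalDiff_apply, hbv, hterm]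

/-- The families `c` and `c'` are chain maps out of the tensor product of the periodic
resolutions with the same augmentation, so that they are homotopic. -/
theorem map_eq_map_of_boundary_eq {B : Type*} [AddCommGroup B] [Module R B] [CharP R p]
    (hS : ∀ i, S i ^ p = 1) (hcomm : ∀ i j, Commute (S i) (S j))
    (hbd : ∀ i x, bd (S i x) = S i (bd x)) {Q : C →ₗ[R] C}
    (hQ : ∀ x, bd (Q x) = x - Q (bd x)) {o c c' : (κ →₀ ℕ) → C}
    (hc : ∀ a, bd (c a) = o a + totalDiff p S c a)
    (hc' : ∀ a, bd (c' a) = o a + totalDiff p S c' a) {e : C →ₗ[R] B}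
    (heb : ∀ x, e (bd x) = 0) (heS : ∀ i x, e (S i x) = e x) (a : κ →₀ ℕ) :
    e (c a) = e (c' a) := by
  set v : (κ →₀ ℕ) → C := fun b ↦ (-1 : ℤ) ^ degree b • (c b - c' b) with hv
  have hdiff (b : κ →₀ ℕ) :
      totalDiff p S v b = -((-1 : ℤ) ^ degree b • totalDiff p S (c - c') b) := by
    calc
      _ = totalDiff p S (-((-1 : ℤ) ^ degree b • (c - c'))) b :=
        totalDiff_congr p S fun b' hb' ↦ by simp [hv, ← hb', pow_succ]
      _ = _ := by rw [map_neg, map_zsmul, Pi.neg_apply, Pi.smul_apply]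
  have hbv (b : κ →₀ ℕ) : bd (v b) + totalDiff p S v b = 0 := by
    rw [hdiff, hv, map_zsmul, map_sub, map_sub, hc, hc', Pi.sub_apply, add_sub_add_left_eq_sub,
      add_neg_cancel]
  have := congrArg e (boundary_conedFamily hS hcomm hbd (Q := fun _ ↦ Q) (fun _ ↦ hQ) hbv a)
  rw [heb, map_add, map_totalDiff_eq_zero p heS, add_zero] at this
  have hzero : (-1 : ℤ) ^ degree a • (e (c a) - e (c' a)) = 0 := by simpa [hv] using this.symm
  rw [← sub_eq_zero]
  rcases neg_one_pow_eq_or ℤ (degree a) with h | h <;> simpa only [h, one_smul, neg_smul,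
    neg_eq_zero] using hzero

end Contraction

end Resolution

section Chains

variable {R Z Z' M : Type*} [CommRing R] [AddCommGroup M] [Module R M]

variable (R Z) in
/-- The augmented complex of ordered simplices with vertices in `Z`: the list `[x₀, …, xₙ]` is an
`n`-simplex, degenerate ones included, and the empty list spans degree `-1`. -/
abbrev Chain := List Z →₀ R

/-- The cone with apex `x`, which prepends the vertex `x` to every simplex. -/
def cone (x : Z) : Chain R Z →ₗ[R] Chain R Z :=
  Finsupp.lmapDomain R R (List.cons x)

/-- The chain map induced by a map on vertices. -/
def pushforward (f : Z → Z') : Chain R Z →ₗ[R] Chain R Z' :=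
  Finsupp.lmapDomain R R (List.map f)

variable (R) in
/-- The alternating sum of the faces of a simplex. -/
def faces : List Z → Chain R Z
  | [] => 0
  | x :: l => single l 1 - cone x (faces l)

/-- The boundary operator of the augmented complex. -/
def boundary : Chain R Z →ₗ[R] Chain R Z :=
  Finsupp.linearCombination R (faces R)

@[simp]
lemma cone_single (x : Z) (l : List Z) (r : R) : cone x (single l r) = single (x :: l) r :=
  Finsupp.mapDomain_single

@[simp]
lemma pushforward_single (f : Z → Z') (l : List Z) (r : R) :
    pushforward f (single l r) = single (l.map f) r :=
  Finsupp.mapDomain_single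

@[simp]
lemma boundary_single (l : List Z) : boundary (single l (1 : R)) = faces R l := by
  simp [boundary]

lemma chain_hom_ext {f g : Chain R Z →ₗ[R] M} (h : ∀ l, f (single l 1) = g (single l 1)) :
    f = g := by
  ext l
  exact h l

lemma map_mem_of_mem_supported {f : Chain R Z →ₗ[R] M} {s : Set (List Z)} {N : Submodule R M}
    (h : ∀ l ∈ s, f (single l 1) ∈ N) {c : Chain R Z} (hc : c ∈ Finsupp.supported R R s) :
    f c ∈ N := by
  rw [Finsupp.supported_eq_span_single] at hc
  exact Submodule.span_le (p := N.comap f).2 (Set.image_subset_iff.2 h) hc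

lemma faces_mem_supported (l : List Z) :
    faces R l ∈ Finsupp.supported R R {l' | l'.length + 1 = l.length ∧ l' ⊆ l} := by
  induction l with
  | nil => exact Submodule.zero_mem _
  | cons x l ih =>
    refine Submodule.sub_mem _ (Finsupp.single_mem_supported R _ ⟨rfl, List.subset_cons_self x l⟩)
      (map_mem_of_mem_supported (fun l' hl' ↦ ?_) ih)
    rw [cone_single]
    exact Finsupp.single_mem_supported R _
      ⟨by simpa using hl'.1, List.cons_subset_cons x hl'.2⟩

lemma chain_hom_ext_of_faces {f g : Chain R Z →ₗ[R] M} (hnil : f (single [] 1) = g (single [] 1))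
    (hcons : ∀ x l, f (faces R (x :: l)) = g (faces R (x :: l)) →
      f (single (x :: l) 1) = g (single (x :: l) 1)) : f = g := by
  refine chain_hom_ext fun l ↦ ?_
  induction h : l.length using Nat.strong_induction_on generalizing l with
  | _ n ih =>
    match l with
    | [] => exact hnil
    | x :: l =>
      refine hcons x l (sub_eq_zero.1 ?_)
      refine map_mem_of_mem_supported (f := f - g) (N := ⊥) (fun l' hl' ↦ ?_)
        (faces_mem_supported (x :: l))
      exact sub_eq_zero.2 (ih l'.length (by have := hl'.1; omega) l' rfl)

lemma boundary_cone (x : Z) (c : Chain R Z) : boundary (cone x c) = c - cone x (boundary c) :=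
  LinearMap.congr_fun (f := boundary ∘ₗ cone x) (g := LinearMap.id - cone x ∘ₗ boundary)
    (chain_hom_ext fun l ↦ by simp [faces]) c

lemma boundary_faces (l : List Z) : boundary (faces R l) = 0 := by
  induction l with
  | nil => simp [faces]
  | cons x l ih => simp [faces, boundary_cone, ih]

lemma pushforward_cone (f : Z → Z') (x : Z) (c : Chain R Z) :
    pushforward f (cone x c) = cone (f x) (pushforward f c) :=
  LinearMap.congr_fun (f := pushforward f ∘ₗ cone x) (g := cone (f x) ∘ₗ pushforward f)
    (chain_hom_ext fun l ↦ by simp) c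

lemma faces_map (f : Z → Z') (l : List Z) : faces R (l.map f) = pushforward f (faces R l) := by
  induction l with
  | nil => simp [faces]
  | cons x l ih => simp [faces, ih, pushforward_cone]

lemma boundary_pushforward (f : Z → Z') (c : Chain R Z) :
    boundary (pushforward f c) = pushforward f (boundary c) :=
  LinearMap.congr_fun (f := boundary ∘ₗ pushforward f) (g := pushforward f ∘ₗ boundary)
    (chain_hom_ext fun l ↦ by simp [faces_map]) c

section Subdivision

variable (b : List Z → Z)

variable (R) in
/-- Subdivision of a single simplex, with `n` bounding its number of vertices. -/
def subdivideSimplex : ℕ → List Z → Chain R Z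
  | 0, l => single l 1
  | n + 1, l => cone (b l) (Finsupp.linearCombination R (subdivideSimplex n) (faces R l))

/-- The subdivision operator: a simplex `l` is replaced by the cone with apex `b l` over the
subdivision of its boundary. For `b` the barycentre this is barycentric subdivision. -/
def subdivide : Chain R Z →ₗ[R] Chain R Z :=
  Finsupp.linearCombination R fun l ↦ subdivideSimplex R b l.length l

lemma subdivide_nil : subdivide b (single [] (1 : R)) = single [] 1 := by
  simp [subdivide, subdivideSimplex]

lemma subdivide_cons (x : Z) (l : List Z) : subdivide b (single (x :: l) (1 : R)) =
    cone (b (x :: l)) (subdivide b (faces R (x :: l))) := by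
  have hfuel : Finsupp.linearCombination R (subdivideSimplex R b l.length) (faces R (x :: l)) =
      subdivide b (faces R (x :: l)) := by
    refine sub_eq_zero.1 (map_mem_of_mem_supported (N := ⊥)
      (f := Finsupp.linearCombination R (subdivideSimplex R b l.length) - subdivide b)
      (fun l' hl' ↦ ?_) (faces_mem_supported (x :: l)))
    have hlen : l'.length = l.length := by simpa using hl'.1
    simp [subdivide, hlen]
  rw [← hfuel]
  simp [subdivide, subdivideSimplex]

lemma boundary_subdivide (c : Chain R Z) :
    boundary (subdivide b c) = subdivide b (boundary c) := by
  refine LinearMap.congr_fun (f := boundary ∘ₗ subdivide b) (g := subdivide b ∘ₗ boundary)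
    (chain_hom_ext_of_faces (by simp [subdivide_nil, faces]) fun x l h ↦ ?_) c
  simp only [LinearMap.comp_apply] at h ⊢
  rw [subdivide_cons, boundary_cone, h, boundary_faces, map_zero, map_zero, sub_zero,
    boundary_single]

lemma subdivide_pushforward {f : Z → Z} (hb : ∀ l, l ≠ [] → b (l.map f) = f (b l))
    (c : Chain R Z) : subdivide b (pushforward f c) = pushforward f (subdivide b c) := by
  refine LinearMap.congr_fun (f := subdivide b ∘ₗ pushforward f)
    (g := pushforward f ∘ₗ subdivide b)
    (chain_hom_ext_of_faces (by simp [subdivide_nil]) fun x l h ↦ ?_) c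
  simp only [LinearMap.comp_apply, pushforward_single, List.map_cons] at h ⊢
  rw [subdivide_cons, subdivide_cons, ← List.map_cons, hb _ (List.cons_ne_nil x l), faces_map, h,
    pushforward_cone]

end Subdivision

section CupProduct

/-- The cup product of a list of 2-cochains, as a function on simplices. -/
def cup : List (Z → Z → Z → R) → List Z → R
  | [], [_] => 1
  | t :: ts, x :: y :: z :: l => t x y z * cup ts (z :: l)
  | _, _ => 0

/-- Evaluation of the cup product of a list of 2-cochains on chains. -/
def evalCup (ts : List (Z → Z → Z → R)) : Chain R Z →ₗ[R] R :=
  Finsupp.linearCombination R (cup ts)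

@[simp]
lemma evalCup_single (ts : List (Z → Z → Z → R)) (l : List Z) :
    evalCup ts (single l 1) = cup ts l := by
  simp [evalCup]

lemma evalCup_nil_cone_cone (x y : Z) (c : Chain R Z) :
    evalCup [] (cone x (cone y c)) = 0 :=
  LinearMap.congr_fun (f := evalCup [] ∘ₗ cone x ∘ₗ cone y) (g := 0)
    (chain_hom_ext fun l ↦ by simp [cup]) c

lemma evalCup_cons_cone_cone_cone (t : Z → Z → Z → R) (ts : List (Z → Z → Z → R)) (x y z : Z)
    (c : Chain R Z) : evalCup (t :: ts) (cone x (cone y (cone z c))) =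
      t x y z * evalCup ts (cone z c) :=
  LinearMap.congr_fun (f := evalCup (t :: ts) ∘ₗ cone x ∘ₗ cone y ∘ₗ cone z)
    (g := t x y z • (evalCup ts ∘ₗ cone z)) (chain_hom_ext fun l ↦ by simp [cup]) c

lemma evalCup_faces {ts : List (Z → Z → Z → R)}
    (hts : ∀ t ∈ ts, ∀ x y z w, t y z w - t x z w + t x y w - t x y z = 0) (l : List Z) :
    evalCup ts (faces R l) = 0 := by
  induction ts generalizing l with
  | nil =>
    match l with
    | [] | [_] | [_, _] => simp [faces, cup]
    | x :: y :: z :: l =>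
      simp only [faces, map_sub, cone_single, evalCup_single, evalCup_nil_cone_cone]
      simp [cup]
  | cons t ts ih =>
    match l with
    | [] | [_] | [_, _] | [_, _, _] => simp [faces, cup]
    | x :: y :: z :: w :: l =>
      have hrec := ih (fun t' ht' ↦ hts t' (List.mem_cons_of_mem t ht')) (z :: w :: l)
      simp only [faces, map_sub, cone_single, evalCup_single, evalCup_cons_cone_cone_cone,
        cup] at hrec ⊢
      linear_combination (cup ts (w :: l)) * hts t List.mem_cons_self x y z w +
        t x y z * hrec

lemma evalCup_boundary {ts : List (Z → Z → Z → R)}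
    (hts : ∀ t ∈ ts, ∀ x y z w, t y z w - t x z w + t x y w - t x y z = 0) (c : Chain R Z) :
    evalCup ts (boundary c) = 0 :=
  LinearMap.congr_fun (f := evalCup ts ∘ₗ boundary) (g := 0)
    (chain_hom_ext fun l ↦ by simp [evalCup_faces hts]) c

lemma cup_map {ts : List (Z → Z → Z → R)} {f : Z → Z}
    (hts : ∀ t ∈ ts, ∀ x y z, t (f x) (f y) (f z) = t x y z) (l : List Z) :
    cup ts (l.map f) = cup ts l := by
  induction ts generalizing l with
  | nil =>
    match l with
    | [] | [_] | _ :: _ :: _ => simp [cup]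
  | cons t ts ih =>
    match l with
    | [] | [_] | [_, _] => simp [cup]
    | x :: y :: z :: l =>
      have hrec := ih (fun t' ht' ↦ hts t' (List.mem_cons_of_mem t ht')) (z :: l)
      simp only [List.map_cons, cup] at hrec ⊢
      rw [hts t List.mem_cons_self, hrec]

lemma evalCup_pushforward {ts : List (Z → Z → Z → R)} {f : Z → Z}
    (hts : ∀ t ∈ ts, ∀ x y z, t (f x) (f y) (f z) = t x y z) (c : Chain R Z) :
    evalCup ts (pushforward f c) = evalCup ts c :=
  LinearMap.congr_fun (f := evalCup ts ∘ₗ pushforward f) (g := evalCup ts)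
    (chain_hom_ext fun l ↦ by simp [cup_map hts]) c

lemma exists_ne_zero_of_cup_ne_zero {ts : List (Z → Z → Z → R)} {l : List Z} (h : cup ts l ≠ 0)
    {t : Z → Z → Z → R} (ht : t ∈ ts) : ∃ x ∈ l, ∃ y ∈ l, ∃ z ∈ l, t x y z ≠ 0 := by
  fun_induction cup ts l with
  | case1 => simp at ht
  | case2 t' ts x y z l ih =>
    rcases List.mem_cons.1 ht with rfl | ht
    · exact ⟨x, by simp, y, by simp, z, by simp, left_ne_zero_of_mul h⟩
    · obtain ⟨x', hx, y', hy, z', hz, h'⟩ := ih (right_ne_zero_of_mul h) ht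
      grind
  | case3 => exact absurd rfl h

end CupProduct

end Chains

section Translation

variable {R G Z : Type*} [CommRing R] [AddCommGroup G] [AddAction G Z]

variable (R Z) in
/-- The action of a group element on chains. -/
def translate (g : G) : Module.End R (Chain R Z) :=
  pushforward (g +ᵥ ·)

lemma translate_add (g h : G) : translate R Z (g + h) = translate R Z g * translate R Z h := by
  refine chain_hom_ext fun l ↦ ?_
  simp [translate, Function.comp_def, add_vadd]

lemma translate_translate (g h : G) (c : Chain R Z) :
    translate R Z g (translate R Z h c) = translate R Z (g + h) c := by
  rw [translate_add, Module.End.mul_apply]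

lemma translate_zero : translate R Z (0 : G) = 1 := by
  refine chain_hom_ext fun l ↦ ?_
  simp [translate]

lemma translate_pow (g : G) (n : ℕ) : translate R Z g ^ n = translate R Z (n • g) := by
  induction n with
  | zero => simp [translate_zero]
  | succ n ih => rw [pow_succ, ih, succ_nsmul, translate_add]

lemma translate_commute (g h : G) : Commute (translate R Z g) (translate R Z h) := by
  rw [Commute, SemiconjBy, ← translate_add, add_comm, translate_add]

lemma translate_cone (g : G) (x : Z) (c : Chain R Z) :
    translate R Z g (cone x c) = cone (g +ᵥ x) (translate R Z g c) :=
  pushforward_cone _ x c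

lemma translate_nil (g : G) : translate R Z g (single [] 1) = single [] 1 := by
  simp [translate]

lemma evalCup_translate {ts : List (Z → Z → Z → R)}
    (hinv : ∀ t ∈ ts, ∀ (g : G) x y z, t (g +ᵥ x) (g +ᵥ y) (g +ᵥ z) = t x y z) (g : G)
    (c : Chain R Z) : evalCup ts (translate R Z g c) = evalCup ts c :=
  evalCup_pushforward (fun t ht ↦ hinv t ht g) c

end Translation

section LinearForm

variable {R κ : Type*} [CommRing R] [Fintype κ]

/-- The linear form with prescribed coefficients, as a polynomial. -/
def linearForm (χ : κ → R) : MvPolynomial κ R :=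
  ∑ i, MvPolynomial.C (χ i) * MvPolynomial.X i

lemma coeff_linearForm_mul (χ : κ → R) (q : MvPolynomial κ R) (b : κ →₀ ℕ) :
    (linearForm χ * q).coeff b = ∑ i ∈ b.support, χ i * q.coeff (b - single i 1) := by
  classical
  simp_rw [linearForm, Finset.sum_mul, MvPolynomial.coeff_sum, mul_assoc, MvPolynomial.coeff_C_mul,
    mul_comm (MvPolynomial.X _), MvPolynomial.coeff_mul_X', mul_ite, mul_zero]
  rw [← Finset.sum_filter, Finset.filter_univ_mem]

lemma linearForm_ne_zero {χ : κ → R} (h : χ ≠ 0) : linearForm χ ≠ 0 := by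
  classical
  obtain ⟨i, hi⟩ := Function.ne_iff.1 h
  intro h0
  apply hi
  have := congrArg (MvPolynomial.coeff (single i 1)) h0
  simpa [linearForm, MvPolynomial.coeff_sum, MvPolynomial.coeff_C_mul, MvPolynomial.coeff_X,
    Finsupp.single_left_inj] using this

lemma linearForm_isHomogeneous (χ : κ → R) : (linearForm χ).IsHomogeneous 1 :=
  MvPolynomial.IsHomogeneous.sum _ _ _ fun i _ ↦ MvPolynomial.isHomogeneous_C_mul_X (χ i) i

lemma exists_coeff_prod_linearForm_ne_zero [IsDomain R] {L : List (κ → R)} (hL : ∀ χ ∈ L, χ ≠ 0) :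
    ∃ b : κ →₀ ℕ, degree b = L.length ∧ (L.map linearForm).prod.coeff b ≠ 0 := by
  have hne : (L.map linearForm).prod ≠ 0 := by
    rw [Ne, List.prod_eq_zero_iff]
    rintro h
    obtain ⟨χ, hχ, h0⟩ := List.mem_map.1 h
    exact linearForm_ne_zero (hL χ hχ) h0
  have hhom : ((L.map linearForm).prod).IsHomogeneous L.length := by
    clear hL hne
    induction L with
    | nil => exact MvPolynomial.isHomogeneous_one _ _
    | cons χ L ih => simpa [add_comm] using (linearForm_isHomogeneous χ).mul ih
  obtain ⟨b, hb⟩ := MvPolynomial.ne_zero_iff.1 hne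
  exact ⟨b, by rw [Finsupp.degree_eq_weight_one]; exact hhom hb, hb⟩

end LinearForm

section Model

variable {R κ Z : Type*} [CommRing R] [Fintype κ] [LinearOrder κ] {p : ℕ}
  [AddAction (κ → ZMod p) Z]

variable (R Z p) in
/-- The action of the `i`-th standard generator of `(ℤ/p)^κ` on chains. -/
def generatorAction (i : κ) : Module.End R (Chain R Z) :=
  translate R Z (Pi.single i 1 : κ → ZMod p)

omit [Fintype κ] in
lemma generatorAction_pow_self (i : κ) : generatorAction R Z p i ^ p = 1 := by
  have : p • (Pi.single i 1 : κ → ZMod p) = 0 := by ext; simp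
  rw [generatorAction, translate_pow, this, translate_zero]

variable (R p) in
/-- The chain map from the tensor product of periodic resolutions of `ℤ/p` to the chains on `Z`
that is built in degree `n` by coning from the point `q n`. -/
def tower (q : ℕ → Z) : (κ →₀ ℕ) → Chain R Z :=
  conedFamily p (generatorAction R Z p) (fun n ↦ cone (q n)) (Pi.single 0 (single [] 1))

variable (R p) in
/-- The tower of cones all of which have the same apex, whose values on cup products can be
computed. -/
def model (z₀ : Z) : (κ →₀ ℕ) → Chain R Z :=
  tower R p fun _ ↦ z₀

/-- The value of a 2-cochain `t` on the generator of degree two in the `i`-th direction. -/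
def period (p : ℕ) [AddAction (κ → ZMod p) Z] (z₀ : Z) (t : Z → Z → Z → R) (i : κ) : R :=
  ∑ j ∈ Finset.range p, t z₀ (j • (Pi.single i 1 : κ → ZMod p) +ᵥ z₀)
    ((j + 1) • (Pi.single i 1 : κ → ZMod p) +ᵥ z₀)

lemma model_zero (z₀ : Z) : model R p z₀ (0 : κ →₀ ℕ) = single [z₀] 1 := by
  rw [model, tower, conedFamily_eq]
  simp [totalDiff_apply, periodicDiff]

lemma model_of_ne_zero (z₀ : Z) {a : κ →₀ ℕ} (ha : a ≠ 0) :
    model R p z₀ a = cone z₀ (totalDiff p (generatorAction R Z p) (model R p z₀) a) := by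
  rw [model, tower, conedFamily_eq]
  simp [ha]

lemma exists_model_eq_cone (z₀ : Z) (a : κ →₀ ℕ) : ∃ c, model R p z₀ a = cone z₀ c := by
  rw [model, tower, conedFamily_eq]
  exact ⟨_, rfl⟩

omit [Fintype κ] in
lemma evalCup_nil_cone_periodicDiff_cone (x y : Z) (c : Chain R Z) (i : κ) (n : ℕ) :
    evalCup [] (cone x (periodicDiff p (generatorAction R Z p i) n (cone y c))) = 0 := by
  cases n with
  | zero => simp [periodicDiff]
  | succ n =>
    simp only [periodicDiff]
    split_ifs <;> simp [generatorAction, LinearMap.sum_apply, translate_pow, translate_cone,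
      evalCup_nil_cone_cone]

lemma evalCup_nil_model (z₀ : Z) {a : κ →₀ ℕ} (ha : a ≠ 0) :
    evalCup [] (model R p z₀ a) = 0 := by
  rw [model_of_ne_zero z₀ ha, totalDiff_apply, map_sum, map_sum]
  refine Finset.sum_eq_zero fun i _ ↦ ?_
  obtain ⟨c, hc⟩ := exists_model_eq_cone (R := R) (p := p) z₀ (a - single i 1)
  rw [map_zsmul, map_zsmul, hc, evalCup_nil_cone_periodicDiff_cone, smul_zero]

lemma evalCup_cons_cone_cone_translate_model {t : Z → Z → Z → R} {ts : List (Z → Z → Z → R)}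
    (hinv : ∀ t ∈ ts, ∀ (g : κ → ZMod p) x y z, t (g +ᵥ x) (g +ᵥ y) (g +ᵥ z) = t x y z)
    (z₀ x y : Z) (g : κ → ZMod p) (b : κ →₀ ℕ) :
    evalCup (t :: ts) (cone x (cone y (translate R Z g (model R p z₀ b)))) =
      t x y (g +ᵥ z₀) * evalCup ts (model R p z₀ b) := by
  obtain ⟨c, hc⟩ := exists_model_eq_cone (R := R) (p := p) z₀ b
  rw [← evalCup_translate hinv g (model R p z₀ b), hc, translate_cone,
    evalCup_cons_cone_cone_cone]

/-- The summand of `evalCup (t :: ts) (model R p z₀ a)` obtained by following the differential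
of the resolution first in direction `i` and then in direction `i'`. -/
def modelTerm (t : Z → Z → Z → R) (ts : List (Z → Z → Z → R)) (z₀ : Z) (a : κ →₀ ℕ)
    (i i' : κ) : R :=
  koszulSign a i • koszulSign (a - single i 1) i' • ∑ j ∈ Finset.range p,
    evalCup (t :: ts) (cone z₀ (cone (j • (Pi.single i 1 : κ → ZMod p) +ᵥ z₀)
      (translate R Z (j • (Pi.single i 1 : κ → ZMod p))
        (periodicDiff p (generatorAction R Z p i') ((a - single i 1 : κ →₀ ℕ) i')
          (model R p z₀ (a - single i 1 - single i' 1))))))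

section EvenDegree

variable {t : Z → Z → Z → R} {ts : List (Z → Z → Z → R)} {z₀ : Z} {a : κ →₀ ℕ}

lemma evalCup_model_eq_sum_sum (ha0 : a ≠ 0) (ha : ∀ i, Even (a i)) :
    evalCup (t :: ts) (model R p z₀ a) =
      ∑ i ∈ a.support, ∑ i' ∈ a.support, modelTerm (p := p) t ts z₀ a i i' := by
  rw [model_of_ne_zero z₀ ha0, totalDiff_apply_of_support_subset p _ _ subset_rfl]
  simp only [map_sum, map_zsmul]
  refine Finset.sum_congr rfl fun i hi ↦ ?_
  have hi0 : a i ≠ 0 := Finsupp.mem_support_iff.1 hi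
  have hlow : a - single i 1 ≠ 0 := fun h ↦ by
    have h1 := DFunLike.congr_fun h i
    have h2 := ha i
    simp only [Finsupp.coe_tsub, Pi.sub_apply, Finsupp.single_eq_same, Finsupp.coe_zero,
      Pi.zero_apply] at h1
    grind
  have hsub : (a - single i 1).support ⊆ a.support := Finsupp.support_mono tsub_le_self
  rw [periodicDiff_of_even p _ hi0 (ha i), model_of_ne_zero z₀ hlow,
    totalDiff_apply_of_support_subset p _ _ hsub]
  simp only [modelTerm, generatorAction, translate_pow, LinearMap.sum_apply, map_sum,
    translate_cone, map_zsmul, ← Finset.smul_sum]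

variable (hinv : ∀ t ∈ ts, ∀ (g : κ → ZMod p) x y z, t (g +ᵥ x) (g +ᵥ y) (g +ᵥ z) = t x y z)
include hinv

lemma modelTerm_antisymm
    (hsymm : ∀ g h : κ → ZMod p,
      t z₀ (g +ᵥ z₀) ((g + h) +ᵥ z₀) = t z₀ (h +ᵥ z₀) ((g + h) +ᵥ z₀))
    (ha : ∀ i, Even (a i)) {i i' : κ} (hi : i ∈ a.support) (hi' : i' ∈ a.support)
    (hlt : i < i') : modelTerm (p := p) t ts z₀ a i' i = -modelTerm (p := p) t ts z₀ a i i' := by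
  rw [Finsupp.mem_support_iff] at hi hi'
  have expand {l l' : κ} (hll : l ≠ l') (hl' : a l' ≠ 0) : modelTerm (p := p) t ts z₀ a l l' =
      koszulSign a l • koszulSign (a - single l 1) l' • ∑ j ∈ Finset.range p,
        ∑ j' ∈ Finset.range p, t z₀ (j • (Pi.single l 1 : κ → ZMod p) +ᵥ z₀)
          ((j • (Pi.single l 1 : κ → ZMod p) + j' • (Pi.single l' 1 : κ → ZMod p)) +ᵥ z₀) *
            evalCup ts (model R p z₀ (a - single l 1 - single l' 1)) := by
    have hlow : (a - single l 1 : κ →₀ ℕ) l' = a l' := by simp [hll]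
    rw [modelTerm, hlow, periodicDiff_of_even p _ hl' (ha l')]
    simp only [generatorAction, translate_pow, LinearMap.sum_apply, map_sum,
      translate_translate, evalCup_cons_cone_cone_translate_model hinv]
  rw [expand hlt.ne hi', expand hlt.ne' hi, koszulSign_sub_single_of_le a hlt.le,
    koszulSign_sub_single_of_lt hi hlt, tsub_right_comm (b := single i' 1), Finset.sum_comm,
    neg_smul, smul_neg, neg_neg, smul_comm]
  refine congrArg _ <| congrArg _ <|
    Finset.sum_congr rfl fun j _ ↦ Finset.sum_congr rfl fun j' _ ↦ ?_
  rw [add_comm, hsymm]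

lemma modelTerm_self (hdeg : ∀ x, t z₀ x x = 0) (ha : ∀ i, Even (a i)) {i : κ}
    (hi : i ∈ a.support) : modelTerm (p := p) t ts z₀ a i i =
      period p z₀ t i * evalCup ts (model R p z₀ (a - single i 1 - single i 1)) := by
  rw [Finsupp.mem_support_iff] at hi
  have hodd : Odd ((a - single i 1 : κ →₀ ℕ) i) := by
    simpa using Nat.Even.sub_odd (Nat.one_le_iff_ne_zero.2 hi) (ha i) odd_one
  have hsign : koszulSign a i * koszulSign a i = 1 := by
    rw [koszulSign, ← mul_pow]; simp
  rw [modelTerm, periodicDiff_of_odd p _ hodd, koszulSign_sub_single_of_le a le_rfl, smul_smul,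
    hsign, one_smul, period, Finset.sum_mul]
  refine Finset.sum_congr rfl fun j _ ↦ ?_
  simp only [generatorAction, LinearMap.sub_apply, Module.End.one_apply, map_sub,
    translate_translate, evalCup_cons_cone_cone_translate_model hinv, hdeg,
    zero_mul, sub_zero, succ_nsmul]

end EvenDegree

/-- The cohomology class of the cup product of `t₁, …, tₙ` is the product of the linear forms
given by the periods of the `tᵢ`. -/
theorem evalCup_model_two_nsmul {ts : List (Z → Z → Z → R)} (z₀ : Z)
    (hinv : ∀ t ∈ ts, ∀ (g : κ → ZMod p) x y z, t (g +ᵥ x) (g +ᵥ y) (g +ᵥ z) = t x y z)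
    (hdeg : ∀ t ∈ ts, ∀ x, t z₀ x x = 0)
    (hsymm : ∀ t ∈ ts, ∀ g h : κ → ZMod p,
      t z₀ (g +ᵥ z₀) ((g + h) +ᵥ z₀) = t z₀ (h +ᵥ z₀) ((g + h) +ᵥ z₀)) (b : κ →₀ ℕ) :
    evalCup ts (model R p z₀ (2 • b)) =
      (ts.map fun t ↦ linearForm (period p z₀ t)).prod.coeff b := by
  induction ts generalizing b with
  | nil =>
    by_cases hb : b = 0
    · simp [hb, model_zero, cup]
    · rw [evalCup_nil_model z₀ (by simpa using hb)]
      simp [MvPolynomial.coeff_one, Ne.symm hb]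
  | cons t ts ih =>
    simp only [List.forall_mem_cons] at hinv hdeg hsymm
    have heven (i : κ) : Even ((2 • b) i) := by simp
    have hsupp : (2 • b).support = b.support := by ext; simp
    rw [List.map_cons, List.prod_cons, coeff_linearForm_mul]
    by_cases hb : b = 0
    · simp [hb, model_zero, cup]
    rw [evalCup_model_eq_sum_sum (by simpa using hb) heven, sum_sum_eq_sum_diag _ _
      fun i hi i' hi' ↦ modelTerm_antisymm hinv.2 hsymm.1 heven hi hi', hsupp]
    refine Finset.sum_congr rfl fun i hi ↦ ?_
    have hlower : 2 • b - single i 1 - single i 1 = 2 • (b - single i 1) := by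
      ext l; by_cases h : i = l <;> simp [h]; omega
    rw [modelTerm_self hinv.2 hdeg.1 heven (hsupp ▸ hi), hlower, ih hinv.2 hdeg.2 hsymm.2]

section Comparison

lemma boundary_tower (q : ℕ → Z) (a : κ →₀ ℕ) : boundary (tower R p q a) =
    (Pi.single 0 (single [] 1) : (κ →₀ ℕ) → Chain R Z) a +
      totalDiff p (generatorAction R Z p) (tower R p q) a :=
  boundary_conedFamily_single generatorAction_pow_self (fun _ _ ↦ translate_commute _ _)
    (fun _ ↦ boundary_pushforward _) (fun n ↦ boundary_cone (q n)) (by simp [faces])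
    (fun _ ↦ translate_nil _) a

lemma boundary_subdivide_pow_tower {b : List Z → Z}
    (hb : ∀ (g : κ → ZMod p) l, l ≠ [] → b (l.map (g +ᵥ ·)) = g +ᵥ b l) (q : ℕ → Z) (n : ℕ)
    (a : κ →₀ ℕ) : boundary ((subdivide b ^ n : Module.End R (Chain R Z)) (tower R p q a)) =
      (Pi.single 0 (single [] 1) : (κ →₀ ℕ) → Chain R Z) a +
        totalDiff p (generatorAction R Z p)
          (fun a' ↦ (subdivide b ^ n : Module.End R (Chain R Z)) (tower R p q a')) a := by
  induction n generalizing a with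
  | zero => exact boundary_tower q a
  | succ n ih =>
    have hnil : subdivide b ((Pi.single 0 (single [] 1) : (κ →₀ ℕ) → Chain R Z) a) =
        (Pi.single 0 (single [] 1) : (κ →₀ ℕ) → Chain R Z) a := by
      rw [Pi.single_apply]
      split_ifs
      · exact subdivide_nil b
      · exact map_zero _
    have hcomm (i : κ) (x : Chain R Z) : subdivide b (generatorAction R Z p i x) =
        generatorAction R Z p i (subdivide b x) :=
      subdivide_pushforward b (hb (Pi.single i 1)) x
    simp only [pow_succ', Module.End.mul_apply]
    rw [boundary_subdivide, ih, map_add, hnil, map_totalDiff p hcomm]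

theorem evalCup_subdivide_pow_tower [CharP R p] {ts : List (Z → Z → Z → R)}
    (hinv : ∀ t ∈ ts, ∀ (g : κ → ZMod p) x y z, t (g +ᵥ x) (g +ᵥ y) (g +ᵥ z) = t x y z)
    (hcocycle : ∀ t ∈ ts, ∀ x y z w, t y z w - t x z w + t x y w - t x y z = 0)
    {b : List Z → Z} (hb : ∀ (g : κ → ZMod p) l, l ≠ [] → b (l.map (g +ᵥ ·)) = g +ᵥ b l)
    (q : ℕ → Z) (z₀ : Z) (n : ℕ) (a : κ →₀ ℕ) :
    evalCup ts ((subdivide b ^ n : Module.End R (Chain R Z)) (tower R p q a)) =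
      evalCup ts (model R p z₀ a) :=
  map_eq_map_of_boundary_eq generatorAction_pow_self (fun _ _ ↦ translate_commute _ _)
    (fun _ ↦ boundary_pushforward _) (boundary_cone z₀) (boundary_subdivide_pow_tower hb q n)
    (boundary_tower _) (evalCup_boundary hcocycle) (fun _ ↦ evalCup_translate hinv _) a

/-- The simplices whose vertices, from the last to the first, lie in the orbits of
`q 0`, `q 1`, …, `q (n - 1)`. -/
def orbitSimplices (G : Type*) [AddCommGroup G] [AddAction G Z] (q : ℕ → Z) (n : ℕ) :
    Set (List Z) :=
  {l | ∃ g : ℕ → G, l = (List.range n).reverse.map fun j ↦ g j +ᵥ q j}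

lemma tower_mem_supported (q : ℕ → Z) (a : κ →₀ ℕ) :
    tower R p q a ∈ Finsupp.supported R R (orbitSimplices (κ → ZMod p) q (degree a + 1)) := by
  refine conedFamily_mem (N := fun n ↦ Finsupp.supported R R (orbitSimplices (κ → ZMod p) q n))
    (fun n i x hx ↦ map_mem_of_mem_supported ?_ hx)
    (fun n x hx ↦ map_mem_of_mem_supported ?_ hx) (fun b ↦ ?_) a
  · rintro _ ⟨g, rfl⟩
    rw [generatorAction, translate, pushforward_single]
    refine Finsupp.single_mem_supported R _ ⟨fun j ↦ Pi.single i 1 + g j, ?_⟩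
    simp [add_vadd]
  · rintro _ ⟨g, rfl⟩
    rw [cone_single]
    refine Finsupp.single_mem_supported R _ ⟨Function.update g n 0, ?_⟩
    rw [List.range_succ, List.reverse_append, List.reverse_singleton, List.singleton_append,
      List.map_cons, Function.update_self, zero_vadd]
    refine congrArg _ (List.map_congr_left fun j hj ↦ ?_)
    have : j < n := by simpa using hj
    rw [Function.update_of_ne this.ne]
  · by_cases hb : b = 0
    · subst hb
      exact Finsupp.single_mem_supported R _ ⟨0, rfl⟩
    · simp [hb]

end Comparison

end Model

section Barycentre

variable {E : Type*} [NormedAddCommGroup E] [NormedSpace ℝ E]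

/-- The barycentre of a list of points, repetitions counted. -/
def barycentre (l : List E) : E :=
  (l.length : ℝ)⁻¹ • l.sum

lemma map_barycentre {F : Type*} [NormedAddCommGroup F] [NormedSpace ℝ F] (f : E →ₗ[ℝ] F)
    (l : List E) : barycentre (l.map f) = f (barycentre l) := by
  simp [barycentre, map_list_sum]

lemma barycentre_mem_convexHull {l : List E} (hl : l ≠ []) :
    barycentre l ∈ convexHull ℝ {x | x ∈ l} := by
  have hsum : barycentre l = ∑ i : Fin l.length, (l.length : ℝ)⁻¹ • l[i] := by
    rw [← Finset.smul_sum, barycentre]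
    congr 1
    exact (Fin.sum_univ_getElem l).symm
  rw [hsum]
  refine (convex_convexHull ℝ _).sum_mem (fun _ _ ↦ by positivity) (by simp [hl]) fun i _ ↦ ?_
  exact subset_convexHull ℝ _ (List.getElem_mem _)

lemma norm_sum_sub_length_smul_le {l : List E} {x : E} {D : ℝ} (h : ∀ y ∈ l, dist x y ≤ D) :
    ‖(l.length : ℝ) • x - l.sum‖ ≤ l.length * D := by
  induction l with
  | nil => simp
  | cons y l ih =>
    rw [List.forall_mem_cons] at h
    calc ‖((y :: l).length : ℝ) • x - (y :: l).sum‖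
        = ‖((l.length : ℝ) • x - l.sum) + (x - y)‖ := by
          congr 1; push_cast [List.length_cons, List.sum_cons]; module
      _ ≤ l.length * D + D := (norm_add_le _ _).trans (add_le_add (ih h.2) (dist_eq_norm x y ▸ h.1))
      _ = (y :: l).length * D := by push_cast [List.length_cons]; ring

lemma dist_barycentre_le {l : List E} {N : ℕ} (hlen : l.length ≤ N) {D : ℝ}
    (h : ∀ x ∈ l, ∀ y ∈ l, dist x y ≤ D) {x : E} (hx : x ∈ l) :
    dist x (barycentre l) ≤ (1 - (N : ℝ)⁻¹) * D := by
  classical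
  have hperm := List.perm_cons_erase hx
  have hbary : x - barycentre l =
      (l.length : ℝ)⁻¹ • (((l.erase x).length : ℝ) • x - (l.erase x).sum) := by
    rw [barycentre, hperm.sum_eq, hperm.length_eq, List.length_cons, List.sum_cons]
    push_cast
    match_scalars <;> field_simp
    ring
  have hD : 0 ≤ D := dist_nonneg.trans (h x hx x hx)
  have hpos : (0 : ℝ) < l.length := by exact_mod_cast List.length_pos_of_mem hx
  have herase : ((l.erase x).length : ℝ) = l.length - 1 := by
    rw [hperm.length_eq]; simp
  calc dist x (barycentre l)
      ≤ (l.length : ℝ)⁻¹ * (((l.erase x).length : ℝ) * D) := by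
        rw [dist_eq_norm, hbary, norm_smul, Real.norm_of_nonneg (by positivity)]
        gcongr
        exact norm_sum_sub_length_smul_le fun y hy ↦ h x hx y (List.mem_of_mem_erase hy)
    _ = (1 - (l.length : ℝ)⁻¹) * D := by rw [herase]; field_simp
    _ ≤ (1 - (N : ℝ)⁻¹) * D := by gcongr

end Barycentre

section Mesh

variable {R E : Type*} [CommRing R] [NormedAddCommGroup E] [NormedSpace ℝ E] {K : Set E}

/-- The apex over a subdivided simplex with vertices in `K`: the barycentre, unless that is not a
point of `K`. -/
def apex [Nonempty K] (l : List K) : K :=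
  open Classical in
  if h : barycentre (l.map Subtype.val) ∈ K then ⟨_, h⟩ else l.headD (Classical.arbitrary K)

lemma apex_map [Nonempty K] {f : K → K} (F : E →ₗ[ℝ] E) (hf : ∀ x : K, (f x : E) = F x)
    (hF : ∀ x, F x ∈ K ↔ x ∈ K) {l : List K} (hl : l ≠ []) : apex (l.map f) = f (apex l) := by
  have hbary : barycentre ((l.map f).map Subtype.val) = F (barycentre (l.map Subtype.val)) := by
    simp [← map_barycentre, Function.comp_def, hf]
  by_cases h : barycentre (l.map Subtype.val) ∈ K
  · have h' := (hF _).2 h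
    rw [← hbary] at h'
    rw [apex, apex, dif_pos h, dif_pos h']
    exact Subtype.ext (hbary.trans (hf ⟨_, h⟩).symm)
  · have h' := mt (hF _).1 h
    rw [← hbary] at h'
    obtain ⟨x, l, rfl⟩ := List.exists_cons_of_ne_nil hl
    rw [apex, apex, dif_neg h, dif_neg h']
    rfl

/-- The convex hull of the vertices of a simplex. -/
def hull (l : List K) : Set E :=
  convexHull ℝ {x | x ∈ l.map Subtype.val}

lemma hull_mono {l l' : List K} (h : l ⊆ l') : hull l ⊆ hull l' :=
  convexHull_mono fun _ hx ↦ List.map_subset _ h hx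

lemma hull_subset {l : List K} {s : Set E} (hs : Convex ℝ s) (h : ∀ x ∈ l, (x : E) ∈ s) :
    hull l ⊆ s :=
  convexHull_min (List.forall_mem_map.2 h) hs

variable [Nonempty K]

lemma coe_apex {l : List K} (hl : l ≠ []) (h : hull l ⊆ K) :
    (apex l : E) = barycentre (l.map Subtype.val) := by
  rw [apex, dif_pos (h (barycentre_mem_convexHull (List.map_eq_nil_iff.not.2 hl)))]

variable (K) in
/-- The simplices of dimension less than `N` that are contained in `K` and have diameter at
most `D`. -/
def smallSimplices (N : ℕ) (D : ℝ) : Set (List K) :=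
  {l | l.length ≤ N ∧ hull l ⊆ K ∧ ∀ x ∈ l, ∀ y ∈ l, dist x y ≤ D}

lemma apex_cons_mem {l l' : List K} {N : ℕ} {D : ℝ} (hl : l ≠ []) (h : l ∈ smallSimplices K N D)
    (hhull : ∀ y ∈ l', (y : E) ∈ hull l)
    (hdist : ∀ x ∈ l', ∀ y ∈ l', dist x y ≤ (1 - (N : ℝ)⁻¹) * D) :
    (∀ y ∈ apex l :: l', (y : E) ∈ hull l) ∧
      ∀ x ∈ apex l :: l', ∀ y ∈ apex l :: l', dist x y ≤ (1 - (N : ℝ)⁻¹) * D := by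
  obtain ⟨hlen, hK, hD⟩ := h
  have hball : hull l ⊆ Metric.closedBall (apex l : E) ((1 - (N : ℝ)⁻¹) * D) :=
    hull_subset (convex_closedBall _ _) fun x hx ↦ by
      rw [coe_apex hl hK]
      refine dist_barycentre_le (by simpa using hlen) ?_ (List.mem_map_of_mem hx)
      simp only [List.forall_mem_map]
      exact hD
  have happex : (apex l : E) ∈ hull l := by
    rw [coe_apex hl hK]
    exact barycentre_mem_convexHull (List.map_eq_nil_iff.not.2 hl)
  have hnear (y : K) (hy : y ∈ l') : dist y (apex l) ≤ (1 - (N : ℝ)⁻¹) * D := hball (hhull y hy)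
  have hself : dist (apex l) (apex l) ≤ (1 - (N : ℝ)⁻¹) * D := hball happex
  refine ⟨List.forall_mem_cons.2 ⟨happex, hhull⟩, ?_⟩
  simp only [List.forall_mem_cons]
  exact ⟨⟨hself, fun y hy ↦ dist_comm y (apex l) ▸ hnear y hy⟩,
    fun x hx ↦ ⟨hnear x hx, hdist x hx⟩⟩

lemma subdivide_single_mem_supported {N : ℕ} {D : ℝ} {l : List K}
    (hl : l ∈ smallSimplices K N D) : subdivide apex (single l (1 : R)) ∈
      Finsupp.supported R R {l' : List K | l'.length = l.length ∧ (∀ y ∈ l', (y : E) ∈ hull l) ∧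
        ∀ y ∈ l', ∀ z ∈ l', dist y z ≤ (1 - (N : ℝ)⁻¹) * D} := by
  induction h : l.length generalizing l with
  | zero =>
    rw [List.length_eq_zero_iff] at h
    subst h
    rw [subdivide_nil]
    exact Finsupp.single_mem_supported R _ (by simp)
  | succ n ih =>
    obtain ⟨x, l₀, rfl⟩ := List.exists_cons_of_length_eq_add_one h
    rw [subdivide_cons]
    have hfaces : subdivide apex (faces R (x :: l₀)) ∈ Finsupp.supported R R
        {l' : List K | l'.length = n ∧ (∀ y ∈ l', (y : E) ∈ hull (x :: l₀)) ∧
          ∀ y ∈ l', ∀ z ∈ l', dist y z ≤ (1 - (N : ℝ)⁻¹) * D} := by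
      refine map_mem_of_mem_supported (fun l' hl' ↦ ?_) (faces_mem_supported (x :: l₀))
      obtain ⟨hlen, hsub⟩ := hl'
      have hl' : l' ∈ smallSimplices K N D :=
        ⟨by have := hl.1; omega, (hull_mono hsub).trans hl.2.1,
          fun x hx y hy ↦ hl.2.2 x (hsub hx) y (hsub hy)⟩
      refine Finsupp.supported_mono ?_ (ih hl' (by omega))
      exact fun l'' h'' ↦ ⟨h''.1, fun y hy ↦ hull_mono hsub (h''.2.1 y hy), h''.2.2⟩
    refine map_mem_of_mem_supported (fun l' hl' ↦ ?_) hfaces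
    rw [cone_single]
    exact Finsupp.single_mem_supported R _
      ⟨by simp [hl'.1], apex_cons_mem (List.cons_ne_nil x l₀) hl hl'.2.1 hl'.2.2⟩

lemma subdivide_mem_supported {N : ℕ} {D : ℝ} {c : Chain R K}
    (hc : c ∈ Finsupp.supported R R (smallSimplices K N D)) :
    subdivide apex c ∈ Finsupp.supported R R (smallSimplices K N ((1 - (N : ℝ)⁻¹) * D)) := by
  refine map_mem_of_mem_supported (fun l hl ↦ ?_) hc
  refine Finsupp.supported_mono (fun l' hl' ↦ ?_) (subdivide_single_mem_supported hl)
  exact ⟨hl'.1.trans_le hl.1, (hull_subset (convex_convexHull ℝ _) hl'.2.1).trans hl.2.1, hl'.2.2⟩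

lemma subdivide_pow_mem_supported {N : ℕ} {D : ℝ} {c : Chain R K}
    (hc : c ∈ Finsupp.supported R R (smallSimplices K N D)) (n : ℕ) :
    (subdivide apex ^ n : Module.End R (Chain R K)) c ∈
      Finsupp.supported R R (smallSimplices K N ((1 - (N : ℝ)⁻¹) ^ n * D)) := by
  induction n with
  | zero => simpa using hc
  | succ n ih =>
    rw [pow_succ', pow_succ', Module.End.mul_apply, mul_assoc]
    exact subdivide_mem_supported ih

end Mesh

section DeletedJoin

variable {V G : Type*} [Fintype V] [Fintype G]

/-- The join of the `γ v`-th copies of the vertices `v`: the face of the deleted join in which the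
vertex `v` may only be used in the copy `γ v` of the simplex. -/
def joinFace (γ : V → G) : Set (V → G → ℝ) :=
  {y | (∀ v g, 0 ≤ y v g) ∧ ∑ v, ∑ g, y v g = 1 ∧ ∀ v g, g ≠ γ v → y v g = 0}

variable (V G) in
/-- The deleted join of copies, indexed by `G`, of the simplex with vertex set `V`. The entry
`y v g` is the barycentric coordinate of the vertex `v` in the `g`-th copy. -/
def deletedJoin : Set (V → G → ℝ) :=
  ⋃ γ, joinFace γ

lemma joinFace_subset_deletedJoin (γ : V → G) : joinFace γ ⊆ deletedJoin V G :=
  Set.subset_iUnion joinFace γ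

lemma convex_joinFace (γ : V → G) : Convex ℝ (joinFace γ) := by
  rintro x ⟨hx0, hx1, hxγ⟩ y ⟨hy0, hy1, hyγ⟩ a b ha hb hab
  refine ⟨fun v g ↦ ?_, ?_, fun v g h ↦ by simp [hxγ v g h, hyγ v g h]⟩
  · exact add_nonneg (mul_nonneg ha (hx0 v g)) (mul_nonneg hb (hy0 v g))
  · simp [Finset.sum_add_distrib, ← Finset.mul_sum, hx1, hy1, hab]

lemma le_one_of_mem_deletedJoin {y : V → G → ℝ} (hy : y ∈ deletedJoin V G) (v : V) (g : G) :
    y v g ≤ 1 := by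
  obtain ⟨γ, h0, h1, -⟩ := Set.mem_iUnion.1 hy
  calc y v g ≤ ∑ g, y v g := Finset.single_le_sum (fun g _ ↦ h0 v g) (Finset.mem_univ g)
    _ ≤ ∑ v, ∑ g, y v g := Finset.single_le_sum (f := fun v ↦ ∑ g, y v g)
      (fun v _ ↦ Finset.sum_nonneg fun g _ ↦ h0 v g) (Finset.mem_univ v)
    _ = 1 := h1

lemma isCompact_deletedJoin : IsCompact (deletedJoin V G) := by
  refine isCompact_iUnion fun γ ↦
    (isCompact_Icc (a := (0 : V → G → ℝ)) (b := 1)).of_isClosed_subset ?_ fun y hy ↦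
      ⟨hy.1, le_one_of_mem_deletedJoin (joinFace_subset_deletedJoin γ hy)⟩
  simp only [joinFace, Set.ofPred_and, Set.ofPred_forall]
  refine .inter ?_ (.inter ?_ ?_)
  · exact isClosed_iInter fun v ↦ isClosed_iInter fun g ↦
      isClosed_le continuous_const (by fun_prop)
  · exact isClosed_eq (by fun_prop) continuous_const
  · exact isClosed_iInter fun v ↦ isClosed_iInter fun g ↦ isClosed_iInter fun _ ↦
      isClosed_eq (by fun_prop) continuous_const

instance : CompactSpace (deletedJoin V G) :=
  isCompact_iff_compactSpace.1 isCompact_deletedJoin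

lemma single_single_mem_joinFace [DecidableEq V] [DecidableEq G] {γ : V → G} {v : V} {g : G}
    (h : g = γ v) : Pi.single v (Pi.single g 1) ∈ joinFace γ := by
  subst h
  have h0 : 0 ≤ (Pi.single v (Pi.single (γ v) 1) : V → G → ℝ) :=
    Pi.single_nonneg.2 (Pi.single_nonneg.2 zero_le_one)
  refine ⟨h0, ?_, fun w h hne ↦ ?_⟩
  · rw [Fintype.sum_eq_single v fun w hw ↦ by simp [hw]]
    simp
  · rcases eq_or_ne w v with rfl | hw
    · simp [hne]
    · simp [hw]

section Action

variable [AddCommGroup G]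

omit [Fintype V] [Fintype G] in
variable (V) in
/-- The permutation of the copies of a simplex by a group element. -/
def shift (g : G) : (V → G → ℝ) →ₗ[ℝ] (V → G → ℝ) :=
  LinearMap.pi fun v ↦ LinearMap.funLeft ℝ ℝ (· - g) ∘ₗ LinearMap.proj v

omit [Fintype V] [Fintype G] in
lemma shift_apply (g : G) (y : V → G → ℝ) (v : V) (h : G) : shift V g y v h = y v (h - g) :=
  rfl

omit [Fintype V] [Fintype G] in
lemma shift_shift (g h : G) (y : V → G → ℝ) : shift V g (shift V h y) = shift V (g + h) y := by
  ext v k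
  simp only [shift_apply, sub_sub]

lemma shift_mem_joinFace (g : G) {γ : V → G} {y : V → G → ℝ} (hy : y ∈ joinFace γ) :
    shift V g y ∈ joinFace (g +ᵥ γ) := by
  obtain ⟨h0, h1, hγ⟩ := hy
  refine ⟨fun v h ↦ h0 _ _, ?_, fun v h hne ↦ hγ _ _ fun heq ↦ hne ?_⟩
  · rw [← h1]
    exact Finset.sum_congr rfl fun v _ ↦ (Equiv.subRight g).sum_comp (y v)
  · rw [Pi.vadd_apply, ← heq, vadd_eq_add, add_sub_cancel]

lemma shift_mem_deletedJoin_iff (g : G) {y : V → G → ℝ} :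
    shift V g y ∈ deletedJoin V G ↔ y ∈ deletedJoin V G := by
  have forward (g : G) {y : V → G → ℝ} (hy : y ∈ deletedJoin V G) :
      shift V g y ∈ deletedJoin V G := by
    obtain ⟨γ, hγ⟩ := Set.mem_iUnion.1 hy
    exact joinFace_subset_deletedJoin _ (shift_mem_joinFace g hγ)
  refine ⟨fun hy ↦ ?_, forward g⟩
  have hback : shift V (-g) (shift V g y) = y := by
    rw [shift_shift]
    ext v h
    simp [shift_apply]
  exact hback ▸ forward (-g) hy

instance : VAdd G (deletedJoin V G) :=
  ⟨fun g y ↦ ⟨shift V g y, (shift_mem_deletedJoin_iff g).2 y.2⟩⟩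

lemma coe_vadd (g : G) (y : deletedJoin V G) :
    ((g +ᵥ y : deletedJoin V G) : V → G → ℝ) = shift V g y :=
  rfl

instance : AddAction G (deletedJoin V G) where
  zero_vadd y := Subtype.ext <| by
    ext v h
    rw [coe_vadd, shift_apply, sub_zero]
  add_vadd g h y := Subtype.ext (shift_shift g h y.1).symm

lemma eq_zero_of_vadd_eq_self {g : G} {y : deletedJoin V G} (heq : g +ᵥ y = y) : g = 0 := by
  obtain ⟨γ, -, h1, hγ⟩ := Set.mem_iUnion.1 y.2
  obtain ⟨v, -, hv⟩ := Finset.exists_ne_zero_of_sum_ne_zero (h1.trans_ne one_ne_zero)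
  obtain ⟨h, -, hh⟩ := Finset.exists_ne_zero_of_sum_ne_zero hv
  have hshift : (y : V → G → ℝ) v (h + g) = (y : V → G → ℝ) v h := by
    conv_lhs => rw [← heq, coe_vadd, shift_apply, add_sub_cancel_right]
  have e₁ : h = γ v := not_imp_comm.1 (hγ v h) hh
  have e₂ : h + g = γ v := not_imp_comm.1 (hγ v (h + g)) (hshift ▸ hh)
  exact left_eq_add.1 (e₁.trans e₂.symm)

/-- The vertex `v` of the zeroth copy of the simplex. -/
def vertex (G : Type*) [Fintype G] [AddCommGroup G] (v : V) : deletedJoin V G :=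
  open Classical in
  ⟨Pi.single v (Pi.single 0 1),
    joinFace_subset_deletedJoin 0 (single_single_mem_joinFace rfl)⟩

lemma vadd_vertex_mem_joinFace {g : G} {γ : V → G} {v : V} (h : g = γ v) :
    ((g +ᵥ vertex G v : deletedJoin V G) : V → G → ℝ) ∈ joinFace γ := by
  classical
  have h0 : 0 = (-g +ᵥ γ) v := by simp [h]
  rw [coe_vadd, ← vadd_neg_vadd g γ]
  exact shift_mem_joinFace g (single_single_mem_joinFace h0)

lemma hull_subset_deletedJoin_of_mem_orbitSimplices {q : ℕ → V} {n : ℕ}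
    (hq : Set.InjOn q (Set.Iio n)) {l : List (deletedJoin V G)}
    (hl : l ∈ orbitSimplices G (fun j ↦ vertex G (q j)) n) : hull l ⊆ deletedJoin V G := by
  obtain ⟨g, rfl⟩ := hl
  have hγ (j : ℕ) (hj : j < n) : g j = g (Function.invFunOn q (Set.Iio n) (q j)) := by
    rw [hq.leftInvOn_invFunOn hj]
  refine (hull_subset (convex_joinFace fun v ↦ g (Function.invFunOn q (Set.Iio n) v))
    fun x hx ↦ ?_).trans (joinFace_subset_deletedJoin _)
  obtain ⟨j, hj, rfl⟩ := List.mem_map.1 hx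
  exact vadd_vertex_mem_joinFace (hγ j (by simpa using hj))

end Action

end DeletedJoin

section SmallSimplices

variable {R κ V : Type*} [CommRing R] [Fintype κ] [LinearOrder κ] [Fintype V] {p : ℕ} [NeZero p]
  [CharP R p]

lemma exists_mem_cup_ne_zero {Z : Type*} {ts : List (Z → Z → Z → R)} {s : Set (List Z)}
    {c : Chain R Z} (hc : c ∈ Finsupp.supported R R s) (h : evalCup ts c ≠ 0) :
    ∃ l ∈ s, cup ts l ≠ 0 := by
  contrapose! h
  exact map_mem_of_mem_supported (N := ⊥) (fun l hl ↦ by simpa using h l hl) hc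

theorem exists_dist_lt_and_cup_ne_zero
    {ts : List (deletedJoin V (κ → ZMod p) → deletedJoin V (κ → ZMod p) →
      deletedJoin V (κ → ZMod p) → R)}
    (hinv : ∀ t ∈ ts, ∀ (g : κ → ZMod p) x y z, t (g +ᵥ x) (g +ᵥ y) (g +ᵥ z) = t x y z)
    (hcocycle : ∀ t ∈ ts, ∀ x y z w, t y z w - t x z w + t x y w - t x y z = 0)
    {z₀ : deletedJoin V (κ → ZMod p)} {a : κ →₀ ℕ} (ha : degree a < Fintype.card V)
    (hne : evalCup ts (model R p z₀ a) ≠ 0) {δ : ℝ} (hδ : 0 < δ) :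
    ∃ l : List (deletedJoin V (κ → ZMod p)),
      (∀ x ∈ l, ∀ y ∈ l, dist x y < δ) ∧ cup ts l ≠ 0 := by
  have : Nonempty (deletedJoin V (κ → ZMod p)) := ⟨z₀⟩
  have : Nonempty V := Fintype.card_pos_iff.1 (by omega)
  set N := degree a + 1 with hN
  obtain ⟨q, -, hq⟩ : ∃ q : ℕ → V, Set.Iio N ⊆ q ⁻¹' Set.univ ∧ Set.InjOn q (Set.Iio N) :=
    (Set.finite_Iio N).exists_injOn_of_encard_le <| by
      rw [Set.encard_univ, ENat.card_eq_coe_fintype_card, ← Finset.coe_Iio,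
        Set.encard_coe_eq_coe_finsetCard, Nat.card_Iio]
      exact_mod_cast ha
  set D := Metric.diam (Set.univ : Set (deletedJoin V (κ → ZMod p)))
  obtain ⟨n, hn⟩ : ∃ n, (1 - (N : ℝ)⁻¹) ^ n * D < δ := by
    have hN1 : (1 : ℝ) ≤ N := by simp [hN]
    have hlim := (tendsto_pow_atTop_nhds_zero_of_lt_one (sub_nonneg.2 (inv_le_one_of_one_le₀ hN1))
      (sub_lt_self 1 (by positivity))).mul_const D
    rw [zero_mul] at hlim
    exact (hlim.eventually_lt_const hδ).exists
  have htower : tower R p (fun j ↦ vertex (κ → ZMod p) (q j)) a ∈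
      Finsupp.supported R R (smallSimplices (deletedJoin V (κ → ZMod p)) N D) := by
    refine Finsupp.supported_mono ?_ (tower_mem_supported _ a)
    refine fun l hl ↦ ⟨?_, hull_subset_deletedJoin_of_mem_orbitSimplices hq hl, fun x _ y _ ↦
      Metric.dist_le_diam_of_mem isCompact_univ.isBounded trivial trivial⟩
    obtain ⟨g, rfl⟩ := hl
    simp [N]
  rw [← evalCup_subdivide_pow_tower hinv hcocycle (b := apex) (fun g l ↦
    apex_map (shift V g) (coe_vadd g) fun _ ↦ shift_mem_deletedJoin_iff g)
    (fun j ↦ vertex (κ → ZMod p) (q j)) z₀ n a] at hne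
  obtain ⟨l, hl, hcup⟩ := exists_mem_cup_ne_zero (subdivide_pow_mem_supported htower n) hne
  exact ⟨l, fun x hx y hy ↦ (hl.2.2 x hx y hy).trans_lt hn, hcup⟩

end SmallSimplices

section Carry

lemma exists_arg_add_arg_sub_arg_mul (u w : ℂˣ) :
    ∃ n : ℤ, (u : ℂ).arg + (w : ℂ).arg - ((u * w : ℂˣ) : ℂ).arg = 2 * Real.pi * n := by
  have h := Complex.arg_mul_coe_angle u.ne_zero w.ne_zero
  rw [← Units.val_mul, ← Real.Angle.coe_add] at h
  exact Real.Angle.angle_eq_iff_two_pi_dvd_sub.1 h.symm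

/-- The number of full turns lost when the arguments of `u` and `w` are added: the cocycle on `ℂˣ`
classifying the extension of the circle by `ℤ` given by the real line. -/
def carry (u w : ℂˣ) : ℤ :=
  (exists_arg_add_arg_sub_arg_mul u w).choose

lemma two_pi_mul_carry (u w : ℂˣ) :
    2 * Real.pi * carry u w = (u : ℂ).arg + (w : ℂ).arg - ((u * w : ℂˣ) : ℂ).arg :=
  (exists_arg_add_arg_sub_arg_mul u w).choose_spec.symm

lemma eq_of_two_pi_mul_eq {m n : ℤ} (h : 2 * Real.pi * m = 2 * Real.pi * n) : m = n := by
  exact_mod_cast mul_left_cancel₀ Real.two_pi_pos.ne' h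

lemma carry_comm (u w : ℂˣ) : carry u w = carry w u := by
  apply eq_of_two_pi_mul_eq
  rw [two_pi_mul_carry, two_pi_mul_carry, mul_comm u w, add_comm]

lemma carry_one_right (u : ℂˣ) : carry u 1 = 0 := by
  apply eq_of_two_pi_mul_eq
  simp [two_pi_mul_carry]

lemma carry_cocycle (u v w : ℂˣ) :
    carry v w - carry (u * v) w + carry u (v * w) - carry u v = 0 := by
  apply eq_of_two_pi_mul_eq
  push_cast
  linear_combination two_pi_mul_carry v w - two_pi_mul_carry (u * v) w +
    two_pi_mul_carry u (v * w) - two_pi_mul_carry u v + congrArg (fun z : ℂˣ ↦ (z : ℂ).arg)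
      (mul_assoc u v w)

lemma carry_eq_zero_of_re_pos {u w : ℂˣ} (hu : 0 < (u : ℂ).re) (hw : 0 < (w : ℂ).re) :
    carry u w = 0 := by
  have hu' := abs_lt.1 (Complex.abs_arg_lt_pi_div_two_iff.2 (Or.inl hu))
  have hw' := abs_lt.1 (Complex.abs_arg_lt_pi_div_two_iff.2 (Or.inl hw))
  apply eq_of_two_pi_mul_eq
  rw [two_pi_mul_carry, Units.val_mul,
    Complex.arg_mul u.ne_zero w.ne_zero ⟨by linarith, by linarith⟩]
  simp

lemma two_pi_mul_sum_carry_pow (u : ℂˣ) (n : ℕ) :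
    2 * Real.pi * ∑ j ∈ Finset.range n, (carry (u ^ j) u : ℝ) =
      n * (u : ℂ).arg - ((u ^ n : ℂˣ) : ℂ).arg := by
  induction n with
  | zero => simp
  | succ n ih =>
    rw [Finset.sum_range_succ, mul_add, ih, two_pi_mul_carry, ← pow_succ]
    push_cast
    ring

variable {p : ℕ} [NeZero p]

/-- The `p`-th root of unity `exp (2πia/p)`. -/
def rootUnit (a : ZMod p) : ℂˣ :=
  Circle.toUnits (ZMod.toCircle a)

lemma coe_rootUnit (a : ZMod p) : (rootUnit a : ℂ) = ZMod.stdAddChar a :=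
  (ZMod.stdAddChar_apply a).symm

lemma rootUnit_zero : rootUnit (0 : ZMod p) = 1 := by
  rw [rootUnit, AddChar.map_zero_eq_one, map_one]

lemma rootUnit_add (a b : ZMod p) : rootUnit (a + b) = rootUnit a * rootUnit b := by
  rw [rootUnit, AddChar.map_add_eq_mul, map_mul, rootUnit, rootUnit]

lemma rootUnit_nsmul (n : ℕ) (a : ZMod p) : rootUnit (n • a) = rootUnit a ^ n := by
  rw [rootUnit, AddChar.map_nsmul_eq_pow, map_pow, rootUnit]

lemma exists_arg_rootUnit (a : ZMod p) :
    ∃ n : ℤ, (rootUnit a : ℂ).arg = 2 * Real.pi * (a.val / p) + n * (2 * Real.pi) := by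
  rw [← Circle.exp_eq_exp, ← ZMod.toCircle_eq_circleExp]
  exact Circle.exp_arg _

lemma sum_carry_rootUnit_pow (a : ZMod p) :
    ∑ j ∈ Finset.range p, (carry (rootUnit a ^ j) (rootUnit a) : ZMod p) = a := by
  obtain ⟨n, hn⟩ := exists_arg_rootUnit a
  have hp : (p : ℝ) ≠ 0 := NeZero.ne _
  have hsum : ∑ j ∈ Finset.range p, carry (rootUnit a ^ j) (rootUnit a) = a.val + p * n := by
    apply eq_of_two_pi_mul_eq
    push_cast
    rw [two_pi_mul_sum_carry_pow, ← rootUnit_nsmul, nsmul_eq_mul, ZMod.natCast_self, zero_mul,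
      rootUnit_zero, hn, Units.val_one, Complex.arg_one]
    field_simp
    ring
  rw [← Int.cast_sum, hsum]
  simp

end Carry

section Lebesgue

lemma re_div_pos_of_norm_sub_lt {x y : ℂ} (h : ‖y - x‖ < ‖x‖) : 0 < (y / x).re := by
  have hx : x ≠ 0 := norm_pos_iff.1 ((norm_nonneg _).trans_lt h)
  have h1 : ‖1 - y / x‖ < 1 := by
    rwa [norm_sub_rev, div_sub_one hx, norm_div, div_lt_one (norm_pos_iff.2 hx)]
  have h2 := (Complex.re_le_norm _).trans_lt h1
  rw [Complex.sub_re, Complex.one_re] at h2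
  linarith

lemma exists_forall_ball_re_div_pos {X ι : Type*} [PseudoMetricSpace X] [CompactSpace X]
    {H : ι → X → ℂ} (hH : ∀ s, Continuous (H s)) (hne : ∀ x, ∃ s, H s x ≠ 0) :
    ∃ δ > 0, ∀ x, ∃ s, ∀ y ∈ Metric.ball x δ, ∀ z ∈ Metric.ball x δ, 0 < (H s z / H s y).re := by
  choose s hs using hne
  let U (x : X) : Set X := {y | ‖H (s x) y - H (s x) x‖ < ‖H (s x) x‖ / 3}
  have hU (x : X) : IsOpen (U x) := by
    have := hH (s x)
    exact isOpen_lt (by fun_prop) continuous_const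
  have hcover : Set.univ ⊆ ⋃ x, U x := fun x _ ↦ Set.mem_iUnion.2 ⟨x, by simp [U, hs x]⟩
  obtain ⟨δ, hδ, hball⟩ := lebesgue_number_lemma_of_metric isCompact_univ hU hcover
  refine ⟨δ, hδ, fun x ↦ ?_⟩
  obtain ⟨i, hi⟩ := hball x trivial
  refine ⟨s i, fun y hy z hz ↦ re_div_pos_of_norm_sub_lt ?_⟩
  have hy : ‖H (s i) y - H (s i) i‖ < ‖H (s i) i‖ / 3 := hi hy
  have hz : ‖H (s i) z - H (s i) i‖ < ‖H (s i) i‖ / 3 := hi hz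
  have htri := norm_sub_norm_le (H (s i) i) (H (s i) y)
  rw [norm_sub_rev] at htri
  have hyz := norm_sub_le_norm_sub_add_norm_sub (H (s i) z) (H (s i) i) (H (s i) y)
  rw [norm_sub_rev (H (s i) i)] at hyz
  linarith

end Lebesgue

lemma exists_equivariant_map {G Z : Type*} [AddGroup G] [AddAction G Z]
    (hfree : ∀ (g : G) (x : Z), g +ᵥ x = x → g = 0) :
    ∃ f : Z → G, ∀ g x, f (g +ᵥ x) = g + f x := by
  let base (x : Z) : Z := (Quotient.mk (AddAction.orbitRel G Z) x).out
  have hbase (x : Z) : ∃ g : G, g +ᵥ base x = x :=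
    AddAction.mem_orbit_symm.1 (AddAction.orbitRel_apply.1 (Quotient.mk_out x))
  choose f hf using hbase
  refine ⟨f, fun g x ↦ ?_⟩
  have hbase_vadd : base (g +ᵥ x) = base x :=
    congrArg Quotient.out (Quotient.sound (AddAction.mem_orbit x g))
  refine (neg_add_eq_zero.1 (hfree _ (base x) ?_)).symm
  rw [add_vadd, neg_vadd_eq_iff, ← hbase_vadd, hf, hbase_vadd, add_vadd, hf]

section CarryCochain

variable {κ Z : Type*} [Fintype κ] {p : ℕ}

variable (p) in
/-- The reduction modulo `p` of the pullback of the carry cocycle along `Λ`. -/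
def carryCochain (Λ : Z → ℂˣ) (x y z : Z) : ZMod p :=
  carry (Λ y / Λ x) (Λ z / Λ y)

lemma carryCochain_cocycle (Λ : Z → ℂˣ) (x y z w : Z) :
    carryCochain p Λ y z w - carryCochain p Λ x z w + carryCochain p Λ x y w -
      carryCochain p Λ x y z = 0 := by
  have h := carry_cocycle (Λ y / Λ x) (Λ z / Λ y) (Λ w / Λ z)
  rw [div_mul_div_cancel', div_mul_div_cancel'] at h
  simpa only [carryCochain, Int.cast_sub, Int.cast_add, Int.cast_zero] using
    congrArg (Int.cast : ℤ → ZMod p) h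

lemma carryCochain_self_right (Λ : Z → ℂˣ) (x y : Z) : carryCochain p Λ x y y = 0 := by
  rw [carryCochain, div_self', carry_one_right, Int.cast_zero]

lemma carryCochain_eq_zero_of_re_pos {Λ : Z → ℂˣ} {x y z : Z}
    (hxy : 0 < ((Λ y : ℂ) / Λ x).re) (hyz : 0 < ((Λ z : ℂ) / Λ y).re) :
    carryCochain p Λ x y z = 0 := by
  rw [carryCochain, carry_eq_zero_of_re_pos (by simpa using hxy) (by simpa using hyz),
    Int.cast_zero]

variable [NeZero p] [AddAction (κ → ZMod p) Z] {χ : κ → ZMod p} {Λ : Z → ℂˣ}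
  (hΛ : ∀ (g : κ → ZMod p) x, Λ (g +ᵥ x) = rootUnit (χ ⬝ᵥ g) * Λ x)
include hΛ

lemma carryCochain_vadd (g : κ → ZMod p) (x y z : Z) :
    carryCochain p Λ (g +ᵥ x) (g +ᵥ y) (g +ᵥ z) = carryCochain p Λ x y z := by
  simp only [carryCochain, hΛ, mul_div_mul_left_eq_div]

lemma carryCochain_vadd_add_vadd (z₀ : Z) (g h : κ → ZMod p) :
    carryCochain p Λ z₀ (g +ᵥ z₀) ((g + h) +ᵥ z₀) =
      carry (rootUnit (χ ⬝ᵥ g)) (rootUnit (χ ⬝ᵥ h)) := by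
  have hdiv : Λ ((g + h) +ᵥ z₀) / Λ (g +ᵥ z₀) = rootUnit (χ ⬝ᵥ h) := by
    rw [add_comm, add_vadd, hΛ h, mul_div_cancel_right]
  rw [carryCochain, hdiv, hΛ, mul_div_cancel_right]

lemma carryCochain_vadd_comm (z₀ : Z) (g h : κ → ZMod p) :
    carryCochain p Λ z₀ (g +ᵥ z₀) ((g + h) +ᵥ z₀) =
      carryCochain p Λ z₀ (h +ᵥ z₀) ((g + h) +ᵥ z₀) := by
  rw [carryCochain_vadd_add_vadd hΛ, add_comm g h, carryCochain_vadd_add_vadd hΛ, carry_comm]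

lemma period_carryCochain [LinearOrder κ] (z₀ : Z) : period p z₀ (carryCochain p Λ) = χ := by
  ext i
  rw [period, ← sum_carry_rootUnit_pow (χ i)]
  refine Finset.sum_congr rfl fun j _ ↦ ?_
  rw [succ_nsmul, carryCochain_vadd_add_vadd hΛ, dotProduct_smul, dotProduct_single_one,
    rootUnit_nsmul]

end CarryCochain

lemma exists_units_lift {κ Z : Type*} [Fintype κ] {p : ℕ} [NeZero p] [AddAction (κ → ZMod p) Z]
    (hfree : ∀ (g : κ → ZMod p) (x : Z), g +ᵥ x = x → g = 0) {χ : κ → ZMod p} {H : Z → ℂ}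
    (hH : ∀ (g : κ → ZMod p) x, H (g +ᵥ x) = ZMod.stdAddChar (χ ⬝ᵥ g) * H x) :
    ∃ Λ : Z → ℂˣ, (∀ x, H x ≠ 0 → Λ x = H x) ∧
      ∀ (g : κ → ZMod p) x, Λ (g +ᵥ x) = rootUnit (χ ⬝ᵥ g) * Λ x := by
  classical
  obtain ⟨f, hf⟩ := exists_equivariant_map hfree
  refine ⟨fun x ↦ if h : H x = 0 then rootUnit (χ ⬝ᵥ f x) else Units.mk0 (H x) h,
    fun x h ↦ by simp [h], fun g x ↦ ?_⟩
  have hzero : H (g +ᵥ x) = 0 ↔ H x = 0 := by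
    rw [hH, ← coe_rootUnit, Units.mul_right_eq_zero]
  by_cases h : H x = 0
  · simp only [h, hzero.2 h, dite_true, hf, dotProduct_add, rootUnit_add]
  · ext
    simp only [dif_neg h, dif_neg (hzero.not.2 h), Units.val_mk0, Units.val_mul, coe_rootUnit]
    exact hH g x

section EquivariantZero

variable {κ V ι : Type*} [Fintype κ] [LinearOrder κ] [Fintype V] [Fintype ι] {p : ℕ} [Fact p.Prime]

/-- The obstruction to a common zero is the product of the Euler classes of the characters `χ s`,
pulled back to the deleted join. -/
theorem exists_forall_eq_zero_of_equivariant {χ : ι → κ → ZMod p} (hχ : ∀ s, χ s ≠ 0)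
    {H : ι → deletedJoin V (κ → ZMod p) → ℂ} (hH : ∀ s, Continuous (H s))
    (hequiv : ∀ s (g : κ → ZMod p) y, H s (g +ᵥ y) = ZMod.stdAddChar (χ s ⬝ᵥ g) * H s y)
    (hcard : 2 * Fintype.card ι < Fintype.card V) : ∃ y, ∀ s, H s y = 0 := by
  obtain ⟨v₀⟩ : Nonempty V := Fintype.card_pos_iff.1 (by omega)
  let z₀ := vertex (κ → ZMod p) v₀
  by_contra! hne
  choose Λ hΛH hΛ using fun s ↦
    exists_units_lift (fun _ _ ↦ eq_zero_of_vadd_eq_self) (hequiv s)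
  obtain ⟨b, hb, hcoeff⟩ : ∃ b : κ →₀ ℕ, degree b = Fintype.card ι ∧
      ((Finset.univ.toList.map χ).map linearForm).prod.coeff b ≠ 0 := by
    simpa using exists_coeff_prod_linearForm_ne_zero (L := Finset.univ.toList.map χ) (by simpa)
  let ts := Finset.univ.toList.map fun s ↦ carryCochain p (Λ s)
  have hinv : ∀ t ∈ ts, ∀ (g : κ → ZMod p) x y z, t (g +ᵥ x) (g +ᵥ y) (g +ᵥ z) = t x y z :=
    List.forall_mem_map.2 fun s _ ↦ carryCochain_vadd (hΛ s)
  have hmodel : evalCup ts (model (ZMod p) p z₀ (2 • b)) ≠ 0 := by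
    rw [evalCup_model_two_nsmul z₀ hinv
      (List.forall_mem_map.2 fun s _ ↦ carryCochain_self_right (Λ s) z₀)
      (List.forall_mem_map.2 fun s _ ↦ carryCochain_vadd_comm (hΛ s) z₀)]
    simpa [ts, Function.comp_def, period_carryCochain (hΛ _)] using hcoeff
  obtain ⟨δ, hδ, hball⟩ := exists_forall_ball_re_div_pos hH hne
  obtain ⟨l, hl, hcup⟩ := exists_dist_lt_and_cup_ne_zero (ts := ts) hinv
    (List.forall_mem_map.2 fun s _ ↦ carryCochain_cocycle (Λ s))
    (show degree (2 • b) < Fintype.card V by simpa [hb]) hmodel hδ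
  have hvalue (s) : ∃ x ∈ l, ∃ y ∈ l, ∃ z ∈ l, carryCochain p (Λ s) x y z ≠ 0 :=
    exists_ne_zero_of_cup_ne_zero hcup (List.mem_map_of_mem (by simp))
  obtain ⟨w, hw, -⟩ := hvalue (hne z₀).choose
  obtain ⟨s, hs⟩ := hball w
  have hre {x y} (hx : x ∈ l) (hy : y ∈ l) : 0 < ((Λ s y : ℂ) / Λ s x).re := by
    have hpos {x y} (hx : x ∈ l) (hy : y ∈ l) := hs x (hl x hx w hw) y (hl y hy w hw)
    have hne {x} (hx : x ∈ l) : H s x ≠ 0 := fun h ↦ by simpa [h] using hpos hx hx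
    rw [hΛH s _ (hne hx), hΛH s _ (hne hy)]
    exact hpos hx hy
  obtain ⟨x, hx, y, hy, z, hz, hcarry⟩ := hvalue s
  exact hcarry (carryCochain_eq_zero_of_re_pos (hre hx hy) (hre hy hz))

end EquivariantZero

section Fourier

variable {κ : Type*} [Fintype κ] [DecidableEq κ] {p : ℕ} [NeZero p]

lemma sum_stdAddChar_dotProduct {a : κ → ZMod p} (ha : a ≠ 0) :
    ∑ χ : κ → ZMod p, (ZMod.stdAddChar (χ ⬝ᵥ a) : ℂ) = 0 := by
  let ψ : AddChar (κ → ZMod p) ℂ :=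
    { toFun χ := ZMod.stdAddChar (χ ⬝ᵥ a)
      map_zero_eq_one' := by simp
      map_add_eq_mul' χ χ' := by rw [add_dotProduct, AddChar.map_add_eq_mul] }
  refine AddChar.sum_eq_zero_of_ne_one (ψ := ψ) fun hψ ↦ ha <| funext fun i ↦
    ZMod.injective_stdAddChar (N := p) ?_
  calc ZMod.stdAddChar (a i) = ψ (Pi.single i 1) := by simp [ψ]
    _ = ZMod.stdAddChar (0 : ZMod p) := by simp [hψ]

lemma sum_stdAddChar_mul_sum (F : (κ → ZMod p) → ℂ) (a : κ → ZMod p) :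
    ∑ χ : κ → ZMod p, ZMod.stdAddChar (-(χ ⬝ᵥ a)) * ∑ g, ZMod.stdAddChar (χ ⬝ᵥ g) * F g =
      Fintype.card (κ → ZMod p) * F a := by
  calc _ = ∑ g, (∑ χ : κ → ZMod p, ZMod.stdAddChar (χ ⬝ᵥ (g - a))) * F g := by
        simp only [Finset.mul_sum, Finset.sum_mul]
        rw [Finset.sum_comm]
        simp only [← mul_assoc, ← AddChar.map_add_eq_mul, dotProduct_sub, neg_add_eq_sub]
    _ = _ := by
        rw [Fintype.sum_eq_single a fun g hg ↦ by
          rw [sum_stdAddChar_dotProduct (sub_ne_zero.2 hg), zero_mul]]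
        simp

lemma eq_of_forall_sum_stdAddChar_eq_zero {F : (κ → ZMod p) → ℂ}
    (hF : ∀ χ : κ → ZMod p, χ ≠ 0 → ∑ g, ZMod.stdAddChar (χ ⬝ᵥ g) * F g = 0)
    (a b : κ → ZMod p) : F a = F b := by
  have hmean (a : κ → ZMod p) : ∑ g, F g = Fintype.card (κ → ZMod p) * F a := by
    rw [← sum_stdAddChar_mul_sum]
    refine Eq.trans ?_ (Fintype.sum_eq_single 0 fun χ hχ ↦ by rw [hF χ hχ, mul_zero]).symm
    simp
  exact mul_left_cancel₀ (by simp [NeZero.ne]) ((hmean a).symm.trans (hmean b))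

end Fourier

section Coincidence

variable {κ V ι : Type*} [Fintype κ] [LinearOrder κ] [Fintype V] [Fintype ι] {p : ℕ} [Fact p.Prime]

/-- The Fourier transform of `g ↦ Φ (y · g)` is equivariant in `y`, and its vanishing off the
trivial character says that this function is constant. -/
theorem exists_mem_deletedJoin_forall_eq_complex {Φ : ι → (V → ℝ) → ℂ}
    (hΦ : ∀ i, ContinuousOn (Φ i) (Set.Ici 0))
    (hcard : 2 * (Fintype.card ι * (Fintype.card (κ → ZMod p) - 1)) < Fintype.card V) :
    ∃ y ∈ deletedJoin V (κ → ZMod p), ∀ i g h, Φ i (y · g) = Φ i (y · h) := by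
  let H (s : ι × {χ : κ → ZMod p // χ ≠ 0}) (y : deletedJoin V (κ → ZMod p)) : ℂ :=
    ∑ g, ZMod.stdAddChar (s.2.1 ⬝ᵥ g) * Φ s.1 (y.1 · g)
  have hcont (s) : Continuous (H s) := by
    refine continuous_finsetSum _ fun g _ ↦ continuous_const.mul ?_
    refine (hΦ s.1).comp_continuous (continuous_pi fun v ↦ ?_) fun y ↦ ?_
    · exact (continuous_apply_apply v g).comp continuous_subtype_val
    · obtain ⟨γ, h0, -⟩ := Set.mem_iUnion.1 y.2
      exact fun v ↦ h0 v g
  have hequiv (s) (g : κ → ZMod p) (y) : H s (g +ᵥ y) = ZMod.stdAddChar (s.2.1 ⬝ᵥ g) * H s y := by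
    simp only [H, Finset.mul_sum]
    refine (Equiv.sum_comp (Equiv.addLeft g) _).symm.trans (Finset.sum_congr rfl fun h _ ↦ ?_)
    simp only [Equiv.coe_addLeft, dotProduct_add, AddChar.map_add_eq_mul, mul_assoc, coe_vadd,
      shift_apply, add_sub_cancel_left]
  obtain ⟨y, hy⟩ := exists_forall_eq_zero_of_equivariant (fun s ↦ s.2.2) hcont hequiv <| by
    rwa [Fintype.card_prod, Fintype.card_subtype_compl, Fintype.card_subtype_eq]
  exact ⟨y, y.2, fun i ↦ eq_of_forall_sum_stdAddChar_eq_zero (F := fun g ↦ Φ i (y.1 · g))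
    fun χ hχ ↦ hy (i, ⟨χ, hχ⟩)⟩

/-- Real functions are paired with the weights of blocks of `|G| - 1` additional vertices. Such a
block cannot meet all the copies, so that its weights vanish as soon as they coincide. -/
theorem exists_mem_deletedJoin_forall_eq {Φ : ι → (V → ℝ) → ℝ}
    (hΦ : ∀ i, ContinuousOn (Φ i) (Set.Ici 0))
    (hcard : Fintype.card ι * (Fintype.card (κ → ZMod p) - 1) < Fintype.card V) :
    ∃ y ∈ deletedJoin V (κ → ZMod p), ∀ i g h, Φ i (y · g) = Φ i (y · h) := by
  let B := {g : κ → ZMod p // g ≠ 0}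
  have hB : Fintype.card B = Fintype.card (κ → ZMod p) - 1 := by
    rw [Fintype.card_subtype_compl, Fintype.card_subtype_eq]
  let Φ' (i : ι) (x : V ⊕ ι × B → ℝ) : ℂ :=
    Φ i (fun v ↦ x (.inl v)) + (∑ b, x (.inr (i, b)) : ℝ) * Complex.I
  have hΦ' (i) : ContinuousOn (Φ' i) (Set.Ici 0) := by
    refine (Complex.continuous_ofReal.comp_continuousOn ?_).add (by fun_prop)
    exact (hΦ i).comp (by fun_prop) fun x hx v ↦ hx (.inl v)
  obtain ⟨y, hy, hyΦ⟩ := exists_mem_deletedJoin_forall_eq_complex (κ := κ) (p := p) hΦ' <| by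
    rw [Fintype.card_sum, Fintype.card_prod, hB]
    omega
  obtain ⟨γ, h0, h1, hγ⟩ := Set.mem_iUnion.1 hy
  have hre (i g h) : Φ i (fun v ↦ y (.inl v) g) = Φ i (fun v ↦ y (.inl v) h) := by
    simpa [Φ'] using congrArg Complex.re (hyΦ i g h)
  have him (i g h) : ∑ b, y (.inr (i, b)) g = ∑ b, y (.inr (i, b)) h := by
    simpa [Φ'] using congrArg Complex.im (hyΦ i g h)
  have hzero (i b g) : y (.inr (i, b)) g = 0 := by
    obtain ⟨h, hh⟩ : ∃ h, ∀ b, γ (.inr (i, b)) ≠ h := by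
      by_contra! hsurj
      have := Fintype.card_le_of_surjective (fun b : B ↦ γ (.inr (i, b))) hsurj
      exact this.not_gt (Fintype.card_subtype_lt (x := 0) (by simp))
    have hsum := (him i g h).trans (Finset.sum_eq_zero fun b _ ↦ hγ _ _ (hh b).symm)
    exact (Finset.sum_eq_zero_iff_of_nonneg fun b _ ↦ h0 _ _).1 hsum b (Finset.mem_univ b)
  refine ⟨fun v ↦ y (.inl v), joinFace_subset_deletedJoin (fun v ↦ γ (.inl v))
    ⟨fun v g ↦ h0 _ _, ?_, fun v g ↦ hγ _ _⟩, hre⟩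
  simpa [Fintype.sum_sum_type, hzero] using h1

end Coincidence

section ConeExtension

variable {V E : Type*} [Fintype V] [NormedAddCommGroup E] [NormedSpace ℝ E]

/-- The extension of a map on the standard simplex to a map on the orthant that is positively
homogeneous of degree one. -/
def coneExtension (f : (V → ℝ) → E) (x : V → ℝ) : E :=
  (∑ v, x v) • f ((∑ v, x v)⁻¹ • x)

lemma inv_sum_smul_mem_stdSimplex {x : V → ℝ} (hx : 0 ≤ x) (h0 : ∑ v, x v ≠ 0) :
    (∑ v, x v)⁻¹ • x ∈ stdSimplex ℝ V :=
  ⟨smul_nonneg (inv_nonneg.2 (Finset.sum_nonneg fun v _ ↦ hx v)) hx, by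
    simp only [Pi.smul_apply, smul_eq_mul, ← Finset.mul_sum, inv_mul_cancel₀ h0]⟩

variable {f : (V → ℝ) → E} (hf : ContinuousOn f (stdSimplex ℝ V))
include hf

lemma exists_norm_coneExtension_le :
    ∃ C, ∀ x : V → ℝ, 0 ≤ x → ‖coneExtension f x‖ ≤ |∑ v, x v| * C := by
  obtain ⟨C, hC⟩ := (isCompact_stdSimplex ℝ V).exists_bound_of_continuousOn hf
  refine ⟨C, fun x hx ↦ ?_⟩
  by_cases h0 : ∑ v, x v = 0
  · simp [coneExtension, h0]
  · rw [coneExtension, norm_smul, Real.norm_eq_abs]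
    exact mul_le_mul_of_nonneg_left (hC _ (inv_sum_smul_mem_stdSimplex hx h0)) (abs_nonneg _)

lemma continuousOn_coneExtension : ContinuousOn (coneExtension f) (Set.Ici 0) := by
  have hsum : Continuous fun x : V → ℝ ↦ ∑ v, x v := by fun_prop
  intro x hx
  by_cases h0 : ∑ v, x v = 0
  · obtain ⟨C, hC⟩ := exists_norm_coneExtension_le hf
    have hbound : ContinuousWithinAt (fun x : V → ℝ ↦ |∑ v, x v| * C) (Set.Ici 0) x :=
      (hsum.abs.mul continuous_const).continuousWithinAt
    have hzero : coneExtension f x = 0 := by rw [coneExtension, h0, zero_smul]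
    rw [ContinuousWithinAt, h0, abs_zero, zero_mul] at hbound
    rw [ContinuousWithinAt, hzero]
    exact squeeze_zero_norm' (eventually_mem_nhdsWithin.mono hC) hbound
  · have hopen : {x : V → ℝ | ∑ v, x v ≠ 0} ∈ nhds x :=
      (isOpen_ne_fun hsum continuous_const).mem_nhds h0
    rw [← continuousWithinAt_inter hopen]
    have hcont : ContinuousOn (coneExtension f) (Set.Ici 0 ∩ {x : V → ℝ | ∑ v, x v ≠ 0}) :=
      hsum.continuousOn.smul <| hf.comp
        ((hsum.continuousOn.inv₀ fun z hz ↦ hz.2).smul continuousOn_id)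
        fun z hz ↦ inv_sum_smul_mem_stdSimplex hz.1 hz.2
    exact hcont x ⟨hx, h0⟩

end ConeExtension

section Tverberg

variable {κ V E : Type*} [Fintype κ] [LinearOrder κ] [Fintype V] [NormedAddCommGroup E]
  [NormedSpace ℝ E] [FiniteDimensional ℝ E] {p : ℕ} [Fact p.Prime]

lemma exists_mem_deletedJoin_forall_eq_of_finrank {Φ : (V → ℝ) → E}
    (hΦ : ContinuousOn Φ (Set.Ici 0))
    (hcard : Module.finrank ℝ E * (Fintype.card (κ → ZMod p) - 1) < Fintype.card V) :
    ∃ y ∈ deletedJoin V (κ → ZMod p), ∀ g h, Φ (y · g) = Φ (y · h) := by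
  let B := Module.finBasis ℝ E
  obtain ⟨y, hy, heq⟩ := exists_mem_deletedJoin_forall_eq (κ := κ) (p := p)
    (Φ := fun i x ↦ B.coord i (Φ x))
    (fun i ↦ (B.coord i).continuous_of_finiteDimensional.comp_continuousOn hΦ)
    (by simpa using hcard)
  exact ⟨y, hy, fun g h ↦ B.ext_elem fun i ↦ heq i g h⟩

lemma disjoint_support_of_mem_deletedJoin {G : Type*} [Fintype G] {y : V → G → ℝ}
    (hy : y ∈ deletedJoin V G) {g h : G} (hgh : g ≠ h) :
    Disjoint (Finset.univ.filter (y · g ≠ 0)) (Finset.univ.filter (y · h ≠ 0)) := by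
  obtain ⟨γ, -, -, hγ⟩ := Set.mem_iUnion.1 hy
  refine Finset.disjoint_filter.2 fun v _ hg hh ↦ hgh ?_
  exact (not_imp_comm.1 (hγ v g) hg).trans (not_imp_comm.1 (hγ v h) hh).symm

/-- The total weight is one of the functions made to coincide, so that the coincidence of the cone
extensions becomes a coincidence of values of `f`. -/
theorem exists_mem_deletedJoin_forall_apply_eq {f : (V → ℝ) → E}
    (hf : ContinuousOn f (stdSimplex ℝ V))
    (hcard : (Module.finrank ℝ E + 1) * (Fintype.card (κ → ZMod p) - 1) < Fintype.card V) :
    ∃ y ∈ deletedJoin V (κ → ZMod p), (∀ g, ∑ v, y v g ≠ 0) ∧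
      ∀ g h, f ((∑ v, y v g)⁻¹ • (y · g)) = f ((∑ v, y v h)⁻¹ • (y · h)) := by
  obtain ⟨y, hy, heq⟩ := exists_mem_deletedJoin_forall_eq_of_finrank (κ := κ) (p := p)
    (Φ := fun x ↦ (coneExtension f x, ∑ v, x v))
    ((continuousOn_coneExtension hf).prodMk (by fun_prop)) (by simpa using hcard)
  have hweight (g h) : ∑ v, y v g = ∑ v, y v h := congrArg Prod.snd (heq g h)
  have hne (g) : ∑ v, y v g ≠ 0 := by
    obtain ⟨γ, -, h1, -⟩ := Set.mem_iUnion.1 hy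
    intro h0
    rw [Finset.sum_comm, Finset.sum_eq_zero fun h _ ↦ (hweight h g).trans h0] at h1
    exact zero_ne_one h1
  refine ⟨y, hy, hne, fun g h ↦ smul_right_injective E (hne g) ?_⟩
  have hcone : coneExtension f (y · g) = coneExtension f (y · h) := congrArg Prod.fst (heq g h)
  simpa only [coneExtension, hweight h g] using hcone

end Tverberg

end TopologicalTverberg

end

open TopologicalTverberg in
theorem topological_tverberg_theorem_general {V E : Type*} [Fintype V] [NormedAddCommGroup E]
    [NormedSpace ℝ E] [FiniteDimensional ℝ E] {p k : ℕ} (hp : p.Prime)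
    (hcard : (Module.finrank ℝ E + 1) * (p ^ k - 1) < Fintype.card V) {f : (V → ℝ) → E}
    (hf : ContinuousOn f (stdSimplex ℝ V)) :
    ∃ S : Fin (p ^ k) → Finset V, (∀ i, (S i).Nonempty) ∧
      (∀ i j, i ≠ j → Disjoint (S i) (S j)) ∧
      (⋂ i, f '' {x ∈ stdSimplex ℝ V | ∀ v ∉ S i, x v = 0}).Nonempty := by
  classical
  have : Fact p.Prime := ⟨hp⟩
  let e : Fin (p ^ k) ≃ (Fin k → ZMod p) := (Fintype.equivFinOfCardEq (by simp)).symm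
  obtain ⟨y, hy, hne, heq⟩ := exists_mem_deletedJoin_forall_apply_eq (κ := Fin k) (p := p) hf
    (by simpa)
  refine ⟨fun i ↦ {v | y v (e i) ≠ 0}, fun i ↦ ?_, fun i j hij ↦
    disjoint_support_of_mem_deletedJoin hy (e.injective.ne hij),
    f ((∑ v, y v 0)⁻¹ • (y · 0)), Set.mem_iInter.2 fun i ↦ ⟨_, ⟨?_, fun v hv ↦ ?_⟩, heq (e i) 0⟩⟩
  · obtain ⟨v, -, hv⟩ := Finset.exists_ne_zero_of_sum_ne_zero (hne (e i))
    exact ⟨v, by simpa using hv⟩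
  · obtain ⟨γ, h0, -⟩ := Set.mem_iUnion.1 hy
    exact inv_sum_smul_mem_stdSimplex (fun v ↦ h0 v (e i)) (hne (e i))
  · have hv0 : y v (e i) = 0 := by simpa using hv
    simp [hv0]

/-- **Topological Tverberg Theorem** for the target space `ℝ^d` and prime power `r`.
Let `r = p^k` be a prime power, `m = (d+1)r - 1`, and `f` a continuous map from the
standard `m`-simplex to `ℝ^d`.  Then there are `r` pairwise disjoint faces of `Δ^m`
whose images under `f` have a common point. -/
theorem topological_tverberg_theorem (d r : ℕ) (hd : 1 ≤ d)
    (hr : ∃ p k : ℕ, p.Prime ∧ 1 ≤ k ∧ r = p ^ k)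
    (m : ℕ) (hm : m = (d + 1) * r - 1)
    (f : (Fin (m + 1) → ℝ) → EuclideanSpace ℝ (Fin d))
    (hf : ContinuousOn f (stdSimplex ℝ (Fin (m + 1)))) :
    ∃ S : Fin r → Finset (Fin (m + 1)),
      (∀ i, (S i).Nonempty) ∧
      (∀ i j, i ≠ j → Disjoint (S i) (S j)) ∧
      (⋂ i : Fin r,
        f '' {x ∈ stdSimplex ℝ (Fin (m + 1)) | ∀ v ∉ S i, x v = 0}).Nonempty := by
  obtain ⟨p, k, hp, -, rfl⟩ := hr
  refine topological_tverberg_theorem_general hp ?_ hf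
  rw [finrank_euclideanSpace_fin, Fintype.card_fin, hm, Nat.mul_sub]
  omega
end

section
/- Let M be a metric space, k ≥ 1 an integer, and K₁, …, K_k compact subsets of M. Suppose that for every ε > 0 there exist a topological space P and a continuous map g : M → P such that every fiber g⁻¹(p) (p ∈ P) has diameter at most ε, and such that ⋂_{i=1}^{k} g(K_i) ≠ ∅. Then ⋂_{i=1}^{k} K_i ≠ ∅. -/
/-!
Compactness turns approximate common points into exact ones: the function
`x ↦ sup_i dist(x, K_i)` is lower semicontinuous, so it attains its minimum on a compact set, and
it vanishes exactly at the common points of the closed sets `K_i`. If a fiber of diameter at most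
`ε` meets every `K_i`, then this function is at most `ε` at every point of that fiber.
-/

open Metric Set
open scoped ENNReal

section

variable {ι M : Type*} [PseudoEMetricSpace M] {K : ι → Set M}

theorem iSup_infEDist_eq_zero_iff_mem_iInter (hK : ∀ i, IsClosed (K i)) {x : M} :
    ⨆ i, infEDist x (K i) = 0 ↔ x ∈ ⋂ i, K i := by
  simp only [ENNReal.iSup_eq_zero, mem_iInter, mem_iff_infEDist_zero_of_closed (hK _)]

theorem lowerSemicontinuous_iSup_infEDist (K : ι → Set M) :
    LowerSemicontinuous fun x ↦ ⨆ i, infEDist x (K i) :=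
  lowerSemicontinuous_iSup fun _ ↦ continuous_infEDist.lowerSemicontinuous

theorem inter_iInter_nonempty_of_forall_infEDist_le {s : Set M} (hs : IsCompact s)
    (hK : ∀ i, IsClosed (K i)) (h : ∀ ε > 0, ∃ x ∈ s, ∀ i, infEDist x (K i) ≤ ε) :
    (s ∩ ⋂ i, K i).Nonempty := by
  have hs_nonempty : s.Nonempty := (h 1 one_pos).imp fun _ hx ↦ hx.1
  obtain ⟨a, ha, hmin⟩ :=
    ((lowerSemicontinuous_iSup_infEDist K).lowerSemicontinuousOn s).exists_isMinOn hs_nonempty hs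
  have hzero : ⨆ i, infEDist a (K i) = 0 := by
    refine nonpos_iff_eq_zero.mp (le_of_forall_gt_imp_ge_of_dense fun ε hε ↦ ?_)
    obtain ⟨x, hx, hxK⟩ := h ε hε
    exact (hmin hx).trans (iSup_le hxK)
  exact ⟨a, ha, (iSup_infEDist_eq_zero_iff_mem_iInter hK).mp hzero⟩

theorem iInter_nonempty_of_forall_exists_ediam_le {i₀ : ι} (hcompact : IsCompact (K i₀))
    (hclosed : ∀ i, IsClosed (K i))
    (h : ∀ ε > 0, ∃ F : Set M, ediam F ≤ ε ∧ ∀ i, (F ∩ K i).Nonempty) :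
    (⋂ i, K i).Nonempty := by
  refine (inter_iInter_nonempty_of_forall_infEDist_le hcompact hclosed fun ε hε ↦ ?_).mono
    inter_subset_right
  obtain ⟨F, hF, hmeets⟩ := h ε hε
  obtain ⟨x, hxF, hx⟩ := hmeets i₀
  refine ⟨x, hx, fun i ↦ ?_⟩
  obtain ⟨y, hyF, hy⟩ := hmeets i
  calc
    infEDist x (K i) ≤ edist x y := infEDist_le_edist_of_mem hy
    _ ≤ ediam F := edist_le_ediam_of_mem hxF hyF
    _ ≤ ε := hF

theorem compact_inter_nonempty_of_small_fiber_maps_general {i₀ : ι}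
    (hcompact : IsCompact (K i₀)) (hclosed : ∀ i, IsClosed (K i))
    (h : ∀ ε > (0 : ℝ), ∃ (P : Type*) (g : M → P),
      ∃ p ∈ ⋂ i, g '' K i, ediam (g ⁻¹' {p}) ≤ ENNReal.ofReal ε) :
    (⋂ i, K i).Nonempty := by
  refine iInter_nonempty_of_forall_exists_ediam_le hcompact hclosed fun ε hε ↦ ?_
  obtain ⟨r, -, hr, hrε⟩ := ENNReal.lt_iff_exists_real_btwn.mp hε
  obtain ⟨P, g, p, hp, hdiam⟩ := h r (ENNReal.ofReal_pos.mp hr)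
  refine ⟨g ⁻¹' {p}, hdiam.trans hrε.le, fun i ↦ ?_⟩
  obtain ⟨x, hx, hxp⟩ := mem_iInter.mp hp i
  exact ⟨x, hxp, hx⟩

end

/-- If `K₁, …, K_k` are compact subsets of a metric space `M` and for every `ε > 0`
there is a continuous map `g : M → P` with all fibers of diameter at most `ε` whose
images `g(K_i)` have a common point, then the sets `K_i` themselves have a common
point. -/
theorem compact_inter_nonempty_of_small_fiber_maps {M : Type*} [MetricSpace M]
    (k : ℕ) (hk : 1 ≤ k) (K : Fin k → Set M)
    (hcompact : ∀ i, IsCompact (K i))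
    (h : ∀ ε > (0 : ℝ), ∃ (P : Type) (_ : TopologicalSpace P) (g : M → P),
      Continuous g ∧ (∀ p : P, EMetric.diam (g ⁻¹' {p}) ≤ ENNReal.ofReal ε) ∧
      (⋂ i, g '' K i).Nonempty) :
    (⋂ i, K i).Nonempty := by
  exact compact_inter_nonempty_of_small_fiber_maps_general (hcompact ⟨0, hk⟩)
    (fun i ↦ (hcompact i).isClosed) fun ε hε ↦
      let ⟨P, _, g, _, hdiam, p, hp⟩ := h ε hε; ⟨P, g, p, hp, hdiam p⟩
end
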